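/- arXiv:2404.05554 — 2 statements merged into one kernel-verified Lean document; each statement's English description precedes it below -/
import Mathlib

section
/- Suppose Assumption VOU holds and let X^stat be the stationary Volterra Ornstein–Uhlenbeck process. Then for all n, N ∈ ℕ, 0 ≤ t₁ < … < t_n and 0 ≤ s₁ < … < s_N, the random vector (X^stat_{t₁},…,X^stat_{t_n}, X^stat_{s₁+h},…,X^stat_{s_N+h}) converges weakly, as h → ∞, to (X^stat_{t₁},…,X^stat_{t_n}, X̄_{s₁},…,X̄_{s_N}), where X̄ is an independent copy of X^stat. -/
open MeasureTheory Set Filter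
open scoped ENNReal NNReal Topology

noncomputable section

/-- A scalar kernel is completely monotone: `C^∞` on `(0,∞)` with
`(-1)^n K^{(n)}(t) ≥ 0` for all `n` and `t > 0`. -/
def CompletelyMonotoneFn (K : ℝ → ℝ) : Prop :=
  ContDiffOn ℝ (⊤ : ℕ∞) K (Set.Ioi 0) ∧
  ∀ (n : ℕ) (t : ℝ), 0 < t → 0 ≤ (-1 : ℝ) ^ n * iteratedDerivWithin n K (Set.Ioi 0) t

/-- Assumption (VOU) on the kernel: `0 ≤ K ∈ L²_loc(ℝ₊)` completely monotone, and
there is `γ ∈ (0,1]` with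
`sup_{0 ≤ t-s ≤ 1} (t-s)^{-2γ}(∫_s^t K(r)² dr + ∫₀^∞ (K((t-s)+r)-K(r))² dr) < ∞`. -/
def AssumptionVOUKernel (K : ℝ → ℝ) (γ : ℝ) : Prop :=
  (∀ t > (0:ℝ), 0 ≤ K t) ∧ CompletelyMonotoneFn K ∧
  (∀ T > (0:ℝ), IntervalIntegrable (fun t => (K t) ^ 2) volume 0 T) ∧
  γ ∈ Set.Ioc (0:ℝ) 1 ∧
  ∃ Cγ : ℝ, ∀ s t : ℝ, 0 ≤ s → s ≤ t → t - s ≤ 1 →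
    IntegrableOn (fun r => (K ((t - s) + r) - K r) ^ 2) (Set.Ioi 0) ∧
    (∫ r in s..t, (K r) ^ 2) + (∫ r in Set.Ioi (0:ℝ), (K ((t - s) + r) - K r) ^ 2) ≤
      Cγ * (t - s) ^ (2 * γ)

/-- `E_β ∈ L²_loc(ℝ₊)` solves the linear Volterra equation
`E_β(t) = K(t) + ∫₀ᵗ K(t-s) β E_β(s) ds`. -/
def SolvesResolventEq (K : ℝ → ℝ) (β : ℝ) (E : ℝ → ℝ) : Prop :=
  (∀ T > (0:ℝ), IntervalIntegrable (fun t => (E t) ^ 2) volume 0 T) ∧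
  ∀ t > (0:ℝ), E t = K t + ∫ s in (0:ℝ)..t, K (t - s) * (β * E s)

/-- `‖K‖_{L¹(ℝ₊)} = ∫₀^∞ K(t) dt ∈ [0,∞]`. -/
noncomputable def normL1 (K : ℝ → ℝ) : ℝ≥0∞ :=
  ∫⁻ t in Set.Ioi (0:ℝ), ENNReal.ofReal (K t)

/-- The mean `𝔼[X_t] = (1 + β∫₀ᵗ E_β)x₀ + (∫₀ᵗ E_β) b` of the VOU process. -/
noncomputable def meanVOU (E : ℝ → ℝ → ℝ) (x₀ b β t : ℝ) : ℝ :=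
  (1 + β * ∫ s in (0:ℝ)..t, E β s) * x₀ + (∫ s in (0:ℝ)..t, E β s) * b

/-- The limit mean `m₁(b,β) = x₀/(1 + ‖K‖_{L¹}|β|) + b/|β|` (with `1/∞ = 0`). -/
noncomputable def m1VOU (K : ℝ → ℝ) (x₀ b β : ℝ) : ℝ :=
  x₀ * ((1 + normL1 K * ENNReal.ofReal |β|)⁻¹).toReal + b / |β|

/-- Covariance of the VOU process: `cov(X_t, X_s) = σ²∫₀^{s∧t} E_β(|t-s|+r)E_β(r) dr`. -/
noncomputable def covVOU (E : ℝ → ℝ → ℝ) (σ β s t : ℝ) : ℝ :=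
  σ ^ 2 * ∫ r in (0:ℝ)..(min s t), E β (|t - s| + r) * E β r

/-- Covariance of the stationary VOU process:
`cov(X^stat_t, X^stat_s) = σ²∫₀^∞ E_β(|t-s|+r)E_β(r) dr`. -/
noncomputable def covStatVOU (E : ℝ → ℝ → ℝ) (σ β s t : ℝ) : ℝ :=
  σ ^ 2 * ∫ r in Set.Ioi (0:ℝ), E β (|t - s| + r) * E β r

/-- `X` is a Gaussian process (over times in `S`) with mean function `m` and
covariance function `c`: every finite linear combination is Gaussian. -/
def IsGaussianProcessOn {Ω : Type*} [MeasurableSpace Ω] (P : Measure Ω) (S : Set ℝ)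
    (X : ℝ → Ω → ℝ) (m : ℝ → ℝ) (c : ℝ → ℝ → ℝ) : Prop :=
  (∀ t, Measurable (X t)) ∧
  ∀ (n : ℕ) (t : Fin n → ℝ) (a : Fin n → ℝ), (∀ i, t i ∈ S) →
    Measure.map (fun ω => ∑ i, a i * X (t i) ω) P =
      ProbabilityTheory.gaussianReal (∑ i, a i * m (t i))
        (Real.toNNReal (∑ i, ∑ j, a i * a j * c (t i) (t j)))

/-!
The characteristic function of a Gaussian vector `(X, Y)` is the product of those of `X` and `Y`
up to the exponential of minus a cross-covariance, so by Lévy's continuity theorem it suffices that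
the covariances `σ² ∫₀^∞ E_β(h + r) E_β(r) dr` tend to `0` as `h → ∞`. By Cauchy–Schwarz this holds
if `E_β ∈ L²(ℝ₊)`.

Square integrability of `E_β` comes from positivity of the kernel: a convex decreasing `K` with
limit `ℓ` satisfies `K(|s - t|) = ℓ + ∫ K''(z₁ + z₂) 1_{(-z₁,z₂)}(s) 1_{(-z₁,z₂)}(t) dz`, hence
`∫ v (K ∗ v) ≥ 0` for every `v ∈ L²` of bounded support. For `v = 1_{(-1,0]} + β 1_{(0,T]} E_β` the
resolvent equation gives `(K ∗ v)(t) = ∫_t^{t+1} K + E_β(t) - K(t)` on `(0,T]`. As `β < 0`, this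
bounds `∫₀ᵀ E_β²` by `∫₀^∞ (K(1 + r) - K(r))² dr + (2 / |β|) ∫₀¹ K`, uniformly in `T`.
-/

section ConvexKernel

theorem integrableOn_Ioi_comp_add_deriv {f f' : ℝ → ℝ} {ℓ : ℝ}
    (hf : ∀ x > 0, HasDerivAt f (f' x) x) (hf' : ∀ x > 0, 0 ≤ f' x)
    (hℓ : Tendsto f atTop (𝓝 ℓ)) {a b : ℝ} (hab : 0 < a + b) :
    IntegrableOn (fun x => f' (a + x)) (Ioi b) ∧ ∫ x in Ioi b, f' (a + x) = ℓ - f (a + b) := by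
  have h_pos {x : ℝ} (hx : b ≤ x) : 0 < a + x := by linarith
  have h_deriv : ∀ x ∈ Ici b, HasDerivAt (fun x => f (a + x)) (f' (a + x)) x :=
    fun x hx => (hf _ (h_pos hx)).comp_const_add a x
  have h_nonneg : ∀ x ∈ Ioi b, 0 ≤ f' (a + x) := fun x hx => hf' _ (h_pos (mem_Ioi.1 hx).le)
  have h_lim := hℓ.comp (tendsto_atTop_add_const_left _ a tendsto_id)
  exact ⟨integrableOn_Ioi_deriv_of_nonneg' h_deriv h_nonneg h_lim,
    integral_Ioi_of_hasDerivAt_of_nonneg' h_deriv h_nonneg h_lim⟩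

theorem integral_mul_integral_mixture_nonneg {α Z : Type*} [MeasurableSpace α]
    [MeasurableSpace Z] {μ : Measure α} {ν : Measure Z} [SFinite μ] [SFinite ν]
    {v : α → ℝ} {w : Z → ℝ} {φ : Z → α → ℝ} (hw : 0 ≤ w)
    (h_int : Integrable (fun q : (α × α) × Z =>
      v q.1.1 * v q.1.2 * (w q.2 * (φ q.2 q.1.1 * φ q.2 q.1.2))) ((μ.prod μ).prod ν)) :
    0 ≤ ∫ p, v p.1 * v p.2 * ∫ z, w z * (φ z p.1 * φ z p.2) ∂ν ∂μ.prod μ := by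
  have h_sq (z : Z) : ∫ p : α × α, v p.1 * v p.2 * (w z * (φ z p.1 * φ z p.2)) ∂μ.prod μ =
      w z * (∫ x, v x * φ z x ∂μ) ^ 2 := by
    rw [sq, ← integral_prod_mul, ← integral_const_mul]
    congr with p
    ring
  simp only [← integral_const_mul]
  rw [integral_integral_swap h_int]
  simp only [h_sq]
  exact integral_nonneg fun z => mul_nonneg (hw z) (sq_nonneg _)

theorem integrable_mul_mul_comp_sub {v k : ℝ → ℝ} (hv : MemLp v 2) (hk : Integrable k) :
    Integrable fun p : ℝ × ℝ => v p.1 * v p.2 * k (p.1 - p.2) := by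
  have h_sq (k : ℝ → ℝ) (hk : Integrable k) :
      Integrable (fun p : ℝ × ℝ => v p.2 ^ 2 * ‖k (p.1 - p.2)‖) (volume.prod volume) := by
    simpa using hv.integrable_sq.convolution_integrand (.mul ℝ ℝ) hk.norm
  have h_swap := (h_sq _ hk.comp_neg).swap
  have h_meas : AEStronglyMeasurable (fun p : ℝ × ℝ => k (p.1 - p.2)) (volume.prod volume) :=
    hk.1.comp_quasiMeasurePreserving (quasiMeasurePreserving_sub volume volume)
  refine ((h_sq k hk).add h_swap).mono'
    ((hv.1.comp_fst.mul hv.1.comp_snd).mul h_meas) (.of_forall fun p => ?_)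
  simp only [Pi.add_apply, Function.comp_apply, Prod.fst_swap, Prod.snd_swap, neg_sub, norm_mul]
  rw [← add_mul]
  gcongr
  rw [← sq_abs, ← sq_abs (v p.1), Real.norm_eq_abs, Real.norm_eq_abs]
  nlinarith [sq_nonneg (|v p.1| - |v p.2|), sq_nonneg (|v p.1| + |v p.2|)]

/-- The weight `K''(z₁ + z₂)`, cut off to `z₁ + z₂ > 0`, with which the windows `(-z₁, z₂)` are
superposed to recover the convex function `K`. -/
def windowWeight (K'' : ℝ → ℝ) (z : ℝ × ℝ) : ℝ := (Ioi 0).indicator K'' (z.1 + z.2)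

/-- The indicator function of the window `(-z₁, z₂)`. -/
def window (z : ℝ × ℝ) : ℝ → ℝ := (Ioo (-z.1) z.2).indicator 1

theorem window_mul_window (z : ℝ × ℝ) (s t : ℝ) :
    window z s * window z t =
      (Ioi (-min s t) ×ˢ Ioi (max s t)).indicator (fun _ => 1) z := by
  classical
  simp only [window, indicator_apply, mem_Ioo, mem_prod, mem_Ioi, Pi.one_apply, neg_lt (b := z.1),
    lt_min_iff, max_lt_iff, mul_ite, mul_one, mul_zero, ← ite_and]
  congr 1
  grind

theorem measurable_window : Measurable fun q : ℝ × ℝ × ℝ => window q.2 q.1 := by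
  have h_meas : MeasurableSet {q : ℝ × ℝ × ℝ | q.1 ∈ Ioo (-q.2.1) q.2.2} :=
    (measurableSet_lt measurable_snd.fst.neg measurable_fst).inter
      (measurableSet_lt measurable_fst measurable_snd.snd)
  exact measurable_const (a := (1 : ℝ)).indicator h_meas

theorem ae_fst_ne_snd : ∀ᵐ p : ℝ × ℝ, p.1 ≠ p.2 := by
  have h_meas : MeasurableSet {p : ℝ × ℝ | p.1 ≠ p.2} :=
    (measurableSet_eq_fun measurable_fst measurable_snd).compl
  exact (Measure.ae_prod_iff_ae_ae h_meas).2 (.of_forall fun x => ae_iff.2 (by simp))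

variable {K K' K'' : ℝ → ℝ} {ℓ : ℝ}

/-- `K` is a nonincreasing convex function on `(0,∞)`, with derivatives `K'` and `K''` there and
limit `ℓ` at infinity. -/
structure IsConvexKernel (K K' K'' : ℝ → ℝ) (ℓ : ℝ) : Prop where
  hasDerivAt : ∀ x > 0, HasDerivAt K (K' x) x
  hasDerivAt_deriv : ∀ x > 0, HasDerivAt K' (K'' x) x
  deriv_nonpos : ∀ x > 0, K' x ≤ 0
  second_deriv_nonneg : ∀ x > 0, 0 ≤ K'' x
  measurable_second_deriv : Measurable K''
  tendsto : Tendsto K atTop (𝓝 ℓ)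

namespace IsConvexKernel

theorem monotoneOn_deriv (hK : IsConvexKernel K K' K'' ℓ) : MonotoneOn K' (Ioi 0) := by
  refine monotoneOn_of_hasDerivWithinAt_nonneg (f' := K'') (convex_Ioi 0)
    (fun x hx => (hK.hasDerivAt_deriv x hx).continuousAt.continuousWithinAt) ?_ ?_ <;>
    rw [interior_Ioi]
  exacts [fun x hx => (hK.hasDerivAt_deriv x hx).hasDerivWithinAt, hK.second_deriv_nonneg]

theorem tendsto_deriv (hK : IsConvexKernel K K' K'' ℓ) : Tendsto K' atTop (𝓝 0) := by
  have h_diff : Tendsto (fun x => K x - K (x - 1)) atTop (𝓝 0) := by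
    simpa [Function.comp_def, sub_eq_add_neg] using
      hK.tendsto.sub (hK.tendsto.comp (tendsto_atTop_add_const_right _ (-1) tendsto_id))
  refine tendsto_of_tendsto_of_tendsto_of_le_of_le' h_diff tendsto_const_nhds ?_ ?_
  · filter_upwards [eventually_gt_atTop 1] with x hx
    obtain ⟨y, hy, hyK⟩ := exists_hasDerivAt_eq_slope K K' (sub_one_lt x)
      (fun y hy => (hK.hasDerivAt y (by linarith [hy.1])).continuousAt.continuousWithinAt)
      (fun y hy => hK.hasDerivAt y (by linarith [hy.1]))
    simp only [sub_sub_cancel, div_one] at hyK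
    exact hyK ▸ hK.monotoneOn_deriv (by grind) (by grind) hy.2.le
  · filter_upwards [eventually_gt_atTop 0] with x hx using hK.deriv_nonpos x hx

theorem integral_Ioi_prod_Ioi (hK : IsConvexKernel K K' K'' ℓ) {a b : ℝ} (hab : 0 < a + b) :
    IntegrableOn (fun z : ℝ × ℝ => K'' (z.1 + z.2)) (Ioi a ×ˢ Ioi b) ∧
      ∫ z in Ioi a ×ˢ Ioi b, K'' (z.1 + z.2) = K (a + b) - ℓ := by
  have h_inner (x : ℝ) (hx : x ∈ Ioi a) := integrableOn_Ioi_comp_add_deriv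
    hK.hasDerivAt_deriv hK.second_deriv_nonneg hK.tendsto_deriv
    (show 0 < x + b by linarith [mem_Ioi.1 hx])
  simp only [zero_sub] at h_inner
  have h_outer := integrableOn_Ioi_comp_add_deriv (f := -K) (f' := -K')
    (fun x hx => (hK.hasDerivAt x hx).neg) (fun x hx => neg_nonneg.2 (hK.deriv_nonpos x hx))
    hK.tendsto.neg (by rwa [add_comm] : 0 < b + a)
  simp only [Pi.neg_apply, add_comm b] at h_outer
  have h_meas {μ : Measure (ℝ × ℝ)} : AEStronglyMeasurable (fun z : ℝ × ℝ => K'' (z.1 + z.2)) μ :=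
    (hK.measurable_second_deriv.comp (measurable_fst.add measurable_snd)).aestronglyMeasurable
  have h_int : IntegrableOn (fun z : ℝ × ℝ => K'' (z.1 + z.2)) (Ioi a ×ˢ Ioi b)
      (volume.prod volume) := by
    rw [IntegrableOn, ← Measure.prod_restrict, integrable_prod_iff h_meas]
    refine ⟨(ae_restrict_mem measurableSet_Ioi).mono fun x hx => (h_inner x hx).1,
      h_outer.1.congr_fun (fun x hx => ?_) measurableSet_Ioi⟩
    beta_reduce
    rw [← (h_inner x hx).2]
    refine setIntegral_congr_fun measurableSet_Ioi fun y hy => (Real.norm_of_nonneg ?_).symm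
    exact hK.second_deriv_nonneg _ (by linarith [mem_Ioi.1 hx, mem_Ioi.1 hy])
  refine ⟨h_int, ?_⟩
  rw [Measure.volume_eq_prod, setIntegral_prod _ h_int,
    setIntegral_congr_fun measurableSet_Ioi fun x hx => (h_inner x hx).2, h_outer.2]
  ring

theorem integral_window_superposition (hK : IsConvexKernel K K' K'' ℓ) {s t : ℝ} (hst : s ≠ t) :
    Integrable (fun z => windowWeight K'' z * (window z s * window z t)) ∧
      ∫ z, windowWeight K'' z * (window z s * window z t) = K |s - t| - ℓ := by
  have h_pos : 0 < -min s t + max s t := by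
    rw [neg_add_eq_sub, max_sub_min_eq_abs]
    exact abs_pos.2 (sub_ne_zero.2 hst.symm)
  have h_eq : (fun z => windowWeight K'' z * (window z s * window z t)) =
      (Ioi (-min s t) ×ˢ Ioi (max s t)).indicator fun z => K'' (z.1 + z.2) := by
    ext z
    rw [window_mul_window]
    by_cases hz : z ∈ Ioi (-min s t) ×ˢ Ioi (max s t)
    · have : 0 < z.1 + z.2 := h_pos.trans (add_lt_add hz.1 hz.2)
      simp [windowWeight, this, hz]
    · simp [hz]
  rw [h_eq, integrable_indicator_iff (by measurability), integral_indicator (by measurability),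
    abs_sub_comm, ← max_sub_min_eq_abs, sub_eq_neg_add (max s t)]
  exact hK.integral_Ioi_prod_Ioi h_pos

theorem windowWeight_nonneg (hK : IsConvexKernel K K' K'' ℓ) : 0 ≤ windowWeight K'' :=
  fun _ => indicator_nonneg hK.second_deriv_nonneg _

theorem measurable_window_superposition (hK : IsConvexKernel K K' K'' ℓ) :
    Measurable fun q : (ℝ × ℝ) × (ℝ × ℝ) =>
      windowWeight K'' q.2 * (window q.2 q.1.1 * window q.2 q.1.2) := by
  refine .mul ((hK.measurable_second_deriv.indicator measurableSet_Ioi).comp (by fun_prop))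
    (.mul ?_ ?_)
  exacts [measurable_window.comp (f := fun q : (ℝ × ℝ) × (ℝ × ℝ) => (q.1.1, q.2)) (by fun_prop),
    measurable_window.comp (f := fun q : (ℝ × ℝ) × (ℝ × ℝ) => (q.1.2, q.2)) (by fun_prop)]

theorem integrable_mul_window_superposition (hK : IsConvexKernel K K' K'' ℓ) {v : ℝ → ℝ}
    (hv : Integrable v) (hvK : Integrable fun p : ℝ × ℝ => v p.1 * v p.2 * K |p.1 - p.2|) :
    Integrable (fun q : (ℝ × ℝ) × (ℝ × ℝ) => v q.1.1 * v q.1.2 *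
      (windowWeight K'' q.2 * (window q.2 q.1.1 * window q.2 q.1.2)))
      ((volume.prod volume).prod volume) := by
  have h_rep (p : ℝ × ℝ) (hp : p.1 ≠ p.2) := hK.integral_window_superposition hp
  have h_vv : Integrable (fun p : ℝ × ℝ => v p.1 * v p.2) := hv.mul_prod hv
  have h_nonneg (p z : ℝ × ℝ) : 0 ≤ windowWeight K'' z * (window z p.1 * window z p.2) := by
    rw [window_mul_window]
    exact mul_nonneg (hK.windowWeight_nonneg z) (indicator_nonneg (fun _ _ => zero_le_one) _)
  refine (integrable_prod_iff
    (h_vv.1.comp_fst.mul hK.measurable_window_superposition.aestronglyMeasurable)).2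
      ⟨ae_fst_ne_snd.mono fun p hp => (h_rep p hp).1.const_mul (v p.1 * v p.2),
        (hvK.sub (h_vv.mul_const ℓ)).norm.congr (ae_fst_ne_snd.mono fun p hp => ?_)⟩
  simp only [Pi.sub_apply, Pi.mul_apply, norm_mul (v p.1 * v p.2), Real.norm_of_nonneg
    (h_nonneg p _), integral_const_mul, ← mul_sub, ← (h_rep p hp).2,
    Real.norm_of_nonneg (integral_nonneg (h_nonneg p))]

theorem integral_mul_mul_abs_sub_nonneg (hK : IsConvexKernel K K' K'' ℓ) (hℓ : 0 ≤ ℓ)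
    {v : ℝ → ℝ} (hv : Integrable v)
    (hvK : Integrable fun p : ℝ × ℝ => v p.1 * v p.2 * K |p.1 - p.2|) :
    0 ≤ ∫ p : ℝ × ℝ, v p.1 * v p.2 * K |p.1 - p.2| := by
  have h_vv : Integrable (fun p : ℝ × ℝ => v p.1 * v p.2) := hv.mul_prod hv
  have h_int := hK.integrable_mul_window_superposition hv hvK
  have h_split : (fun p : ℝ × ℝ => v p.1 * v p.2 * K |p.1 - p.2|) =ᵐ[volume]
      fun p => v p.1 * v p.2 * ℓ + v p.1 * v p.2 *
        ∫ z, windowWeight K'' z * (window z p.1 * window z p.2) := by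
    filter_upwards [ae_fst_ne_snd] with p hp
    rw [(hK.integral_window_superposition hp).2]
    ring
  rw [integral_congr_ae h_split, integral_add (h_vv.mul_const ℓ) ?_, integral_mul_const,
    Measure.volume_eq_prod, integral_prod_mul]
  · exact add_nonneg (mul_nonneg (mul_self_nonneg _) hℓ)
      (integral_mul_integral_mixture_nonneg hK.windowWeight_nonneg h_int)
  · exact h_int.integral_prod_left.congr
      (.of_forall fun p => integral_const_mul (v p.1 * v p.2) _)

theorem integral_mul_mul_sub_nonneg (hK : IsConvexKernel K K' K'' ℓ) (hℓ : 0 ≤ ℓ)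
    {v : ℝ → ℝ} (hv : Integrable v)
    (hvK : Integrable fun p : ℝ × ℝ => v p.1 * v p.2 * (Ioi 0).indicator K (p.1 - p.2)) :
    0 ≤ ∫ p : ℝ × ℝ, v p.1 * v p.2 * (Ioi 0).indicator K (p.1 - p.2) := by
  have h_swap : Integrable fun p : ℝ × ℝ =>
      v p.2 * v p.1 * (Ioi 0).indicator K (p.2 - p.1) := hvK.swap
  have h_sym : (fun p : ℝ × ℝ => v p.1 * v p.2 * K |p.1 - p.2|) =ᵐ[volume]
      fun p => v p.1 * v p.2 * (Ioi 0).indicator K (p.1 - p.2) +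
        v p.2 * v p.1 * (Ioi 0).indicator K (p.2 - p.1) := by
    filter_upwards [ae_fst_ne_snd] with p hp
    rcases hp.lt_or_gt with h | h
    · simp [abs_of_neg (sub_neg.2 h), h, h.le, mul_comm (v p.1)]
    · simp [abs_of_pos (sub_pos.2 h), h, h.le]
  have h_swap_eq : ∫ p : ℝ × ℝ, v p.2 * v p.1 * (Ioi 0).indicator K (p.2 - p.1) =
      ∫ p : ℝ × ℝ, v p.1 * v p.2 * (Ioi 0).indicator K (p.1 - p.2) :=
    integral_prod_swap (μ := volume) (ν := volume)
      fun p : ℝ × ℝ => v p.1 * v p.2 * (Ioi 0).indicator K (p.1 - p.2)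
  have h_nonneg := hK.integral_mul_mul_abs_sub_nonneg hℓ hv ((hvK.add h_swap).congr h_sym.symm)
  rw [integral_congr_ae h_sym, integral_add hvK h_swap, h_swap_eq] at h_nonneg
  linarith

theorem integral_mul_convolution_nonneg (hK : IsConvexKernel K K' K'' ℓ) (hℓ : 0 ≤ ℓ)
    {a b : ℝ} (hab : a ≤ b) (hK_int : IntervalIntegrable K volume 0 (b - a)) {v : ℝ → ℝ}
    (hv : MemLp v 2 (volume.restrict (Ioc a b))) :
    IntervalIntegrable (fun t => v t * ∫ s in a..t, K (t - s) * v s) volume a b ∧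
      0 ≤ ∫ t in a..b, v t * ∫ s in a..t, K (t - s) * v s := by
  set u := (Ioc a b).indicator v
  set k := (Ioo 0 (b - a)).indicator K
  have hu : MemLp u 2 := (memLp_indicator_iff_restrict measurableSet_Ioc).2 hv
  have hu_int : Integrable u :=
    (integrable_indicator_iff measurableSet_Ioc).2 (hv.integrable one_le_two)
  have hk : Integrable k := (integrable_indicator_iff measurableSet_Ioo).2
    ((intervalIntegrable_iff_integrableOn_Ioo_of_le (sub_nonneg.2 hab)).1 hK_int)
  have h_int := integrable_mul_mul_comp_sub hu hk
  have h_eq : (fun p : ℝ × ℝ => u p.1 * u p.2 * k (p.1 - p.2)) =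
      fun p => u p.1 * u p.2 * (Ioi 0).indicator K (p.1 - p.2) := by
    ext p
    simp only [u, k, indicator_apply]
    grind
  have h_section : (fun t => ∫ s, u t * u s * k (t - s)) =
      (Ioc a b).indicator fun t => v t * ∫ s in a..t, K (t - s) * v s := by
    ext t
    by_cases ht : t ∈ Ioc a b
    swap; · simp [u, ht]
    have h_eq (s : ℝ) :
        u t * u s * k (t - s) = v t * (Ioo a t).indicator (fun s => K (t - s) * v s) s := by
      simp only [u, k, indicator_apply]
      grind
    simp only [h_eq, integral_const_mul, integral_indicator measurableSet_Ioo, ht,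
      indicator_of_mem, intervalIntegral.integral_of_le ht.1.le, integral_Ioc_eq_integral_Ioo]
  have h_nonneg := hK.integral_mul_mul_sub_nonneg hℓ hu_int (h_eq ▸ h_int)
  rw [← h_eq, Measure.volume_eq_prod, integral_prod _ h_int, h_section,
    integral_indicator measurableSet_Ioc] at h_nonneg
  rw [intervalIntegrable_iff_integrableOn_Ioc_of_le hab, intervalIntegral.integral_of_le hab,
    ← integrable_indicator_iff measurableSet_Ioc, ← h_section]
  exact ⟨h_int.integral_prod_left, h_nonneg⟩

end IsConvexKernel

end ConvexKernel

namespace CompletelyMonotoneFn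

variable {K : ℝ → ℝ}

theorem nonneg (hK : CompletelyMonotoneFn K) {x : ℝ} (hx : 0 < x) : 0 ≤ K x := by
  simpa using hK.2 0 x hx

theorem hasDerivAt (hK : CompletelyMonotoneFn K) {x : ℝ} (hx : 0 < x) :
    HasDerivAt K (deriv K x) x :=
  ((hK.1.differentiableOn (by simp)).differentiableAt (Ioi_mem_nhds hx)).hasDerivAt

theorem hasDerivAt_deriv (hK : CompletelyMonotoneFn K) {x : ℝ} (hx : 0 < x) :
    HasDerivAt (deriv K) (deriv (deriv K) x) x :=
  (((hK.1.deriv_of_isOpen (m := 1) isOpen_Ioi (by norm_cast)).differentiableOn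
    (by simp)).differentiableAt (Ioi_mem_nhds hx)).hasDerivAt

theorem deriv_nonpos (hK : CompletelyMonotoneFn K) {x : ℝ} (hx : 0 < x) : deriv K x ≤ 0 := by
  have := hK.2 1 x hx
  rw [iteratedDerivWithin_of_isOpen isOpen_Ioi hx, iteratedDeriv_one] at this
  linarith

theorem second_deriv_nonneg (hK : CompletelyMonotoneFn K) {x : ℝ} (hx : 0 < x) :
    0 ≤ deriv (deriv K) x := by
  have := hK.2 2 x hx
  rw [iteratedDerivWithin_of_isOpen isOpen_Ioi hx, iteratedDeriv_succ, iteratedDeriv_one] at this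
  linarith

theorem antitoneOn (hK : CompletelyMonotoneFn K) : AntitoneOn K (Ioi 0) := by
  refine antitoneOn_of_hasDerivWithinAt_nonpos (f' := deriv K) (convex_Ioi 0)
    (fun x hx => (hK.hasDerivAt hx).continuousAt.continuousWithinAt) ?_ ?_ <;> rw [interior_Ioi]
  exacts [fun x hx => (hK.hasDerivAt hx).hasDerivWithinAt, fun x hx => hK.deriv_nonpos hx]

theorem aestronglyMeasurable (hK : CompletelyMonotoneFn K) :
    AEStronglyMeasurable K (volume.restrict (Ioi 0)) :=
  hK.1.continuousOn.aestronglyMeasurable measurableSet_Ioi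

theorem intervalIntegrable (hK : CompletelyMonotoneFn K)
    (hK_sq : ∀ T > 0, IntervalIntegrable (fun t => K t ^ 2) volume 0 T) {a b : ℝ} (ha : 0 ≤ a)
    (hab : a ≤ b) : IntervalIntegrable K volume a b := by
  have h_sub : Ioc a b ⊆ Ioc 0 (b + 1) := Ioc_subset_Ioc ha (by linarith)
  have h_memLp : MemLp K 2 (volume.restrict (Ioc 0 (b + 1))) :=
    (memLp_two_iff_integrable_sq (hK.aestronglyMeasurable.mono_set Ioc_subset_Ioi_self)).2
      (hK_sq _ (by linarith)).1
  rw [intervalIntegrable_iff_integrableOn_Ioc_of_le hab]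
  exact IntegrableOn.mono_set (h_memLp.integrable one_le_two) h_sub

theorem integral_mem_Icc (hK : CompletelyMonotoneFn K) {t : ℝ} (ht : 0 < t) :
    ∫ u in t..t + 1, K u ∈ Icc (K (1 + t)) (K t) := by
  have h_le : t ≤ t + 1 := by linarith
  have h_anti : AntitoneOn K (Icc t (t + 1)) :=
    hK.antitoneOn.mono fun u hu => ht.trans_le hu.1
  have h_int : IntervalIntegrable K volume t (t + 1) :=
    AntitoneOn.intervalIntegrable (uIcc_of_le h_le ▸ h_anti)
  have h_bound (u : ℝ) (hu : u ∈ Icc t (t + 1)) : K u ∈ Icc (K (1 + t)) (K t) :=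
    ⟨add_comm 1 t ▸ h_anti hu (right_mem_Icc.2 h_le) hu.2, h_anti (left_mem_Icc.2 h_le) hu hu.1⟩
  constructor
  · simpa using intervalIntegral.integral_mono_on h_le intervalIntegrable_const h_int
      fun u hu => (h_bound u hu).1
  · simpa using intervalIntegral.integral_mono_on h_le h_int intervalIntegrable_const
      fun u hu => (h_bound u hu).2

theorem exists_isConvexKernel (hK : CompletelyMonotoneFn K) :
    ∃ ℓ, 0 ≤ ℓ ∧ IsConvexKernel K (deriv K) (deriv (deriv K)) ℓ := by
  have h_pos (x : ℝ) : 0 < max x 1 := by positivity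
  have h_anti : Antitone fun x => K (max x 1) := fun x y hxy =>
    hK.antitoneOn (h_pos x) (h_pos y) (max_le_max_right 1 hxy)
  have h_bdd : BddBelow (range fun x => K (max x 1)) :=
    ⟨0, forall_mem_range.2 fun x => hK.nonneg (h_pos x)⟩
  refine ⟨⨅ x, K (max x 1), le_ciInf fun x => hK.nonneg (h_pos x), fun x => hK.hasDerivAt,
    fun x => hK.hasDerivAt_deriv, fun x => hK.deriv_nonpos, fun x => hK.second_deriv_nonneg,
    measurable_deriv _, (tendsto_atTop_ciInf h_anti h_bdd).congr' ?_⟩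
  filter_upwards [eventually_ge_atTop 1] with x hx
  rw [max_eq_left hx]

end CompletelyMonotoneFn

theorem aestronglyMeasurable_of_forall_eq_or_left {E : Type*} [TopologicalSpace E]
    [TopologicalSpace.PseudoMetrizableSpace E] {μ : Measure ℝ} [NullSingletonClass μ] {f g : ℝ → E}
    {s : Set ℝ} (hs : MeasurableSet s) (hg : AEStronglyMeasurable g (μ.restrict s))
    (h : ∀ t ∈ s, f t = g t ∨ ∃ y < t, AEStronglyMeasurable f (μ.restrict (Ioo y t))) :
    AEStronglyMeasurable f (μ.restrict s) := by
  -- Let `U` be the union of all open intervals on which `f` is measurable. A point of `s \ U` at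
  -- which `f` and `g` differ is isolated from the left in `Uᶜ`, and such points are countable.
  let I := {p : ℝ × ℝ | AEStronglyMeasurable f (μ.restrict (Ioo p.1 p.2))}
  let U := ⋃ p ∈ I, Ioo p.1 p.2
  have hU_open : IsOpen U := isOpen_biUnion fun _ _ => isOpen_Ioo
  have hU : AEStronglyMeasurable f (μ.restrict U) := by
    obtain ⟨T, hTI, hT, hTU⟩ := TopologicalSpace.isOpen_biUnion_countable I
      (fun p => Ioo p.1 p.2) fun _ _ => isOpen_Ioo
    have := hT.to_subtype
    rw [← show ⋃ p ∈ T, Ioo p.1 p.2 = U from hTU, biUnion_eq_iUnion,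
      aestronglyMeasurable_iUnion_iff]
    exact fun p => hTI p.2
  have h_isolated : μ {t ∈ Uᶜ | 𝓝[Uᶜ ∩ Iio t] t = ⊥} = 0 :=
    countable_setOfPred_isolated_left_within.measure_zero _
  have h_diff : AEStronglyMeasurable f (μ.restrict (s \ U)) := by
    refine (hg.mono_set sdiff_subset).congr ?_
    filter_upwards [ae_restrict_mem (hs.diff hU_open.measurableSet),
      ae_restrict_of_ae (compl_mem_ae_iff.2 h_isolated)] with t ht h_ni
    refine ((h t ht.1).resolve_right fun ⟨y, hy, hf⟩ => h_ni ⟨ht.2, ?_⟩).symm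
    rw [inter_comm, nhdsWithin_inter', ← disjoint_iff, disjoint_principal_right, compl_compl]
    exact mem_of_superset (Ioo_mem_nhdsLT hy)
      (subset_biUnion_of_mem (u := fun p : ℝ × ℝ => Ioo p.1 p.2) (show (y, t) ∈ I from hf))
  rw [← inter_union_sdiff s U, aestronglyMeasurable_union_iff]
  exact ⟨hU.mono_set inter_subset_right, h_diff⟩

/-- The test function `1` on `(-∞, 0]`, continued by `β E` on `(0, ∞)`. It is chosen so that the
resolvent equation evaluates its convolution with the kernel over `(-1, t]`. -/
def resolventTest (β : ℝ) (E : ℝ → ℝ) (t : ℝ) : ℝ := if t ≤ 0 then 1 else β * E t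

theorem integral_convolution_resolventTest_le {K E : ℝ → ℝ} {β : ℝ} {t : ℝ}
    (hK_int : IntervalIntegrable K volume 0 1) (hK_nonneg : ∀ u > 0, 0 ≤ K u)
    (ht : t ∈ Icc (-1) 0) :
    ∫ s in -1..t, K (t - s) * resolventTest β E s ≤ ∫ u in 0..1, K u := by
  have h_eq : EqOn (fun s => K (t - s) * resolventTest β E s) (fun s => K (t - s)) (Icc (-1) t) :=
    fun s hs => by simp [resolventTest, hs.2.trans ht.2]
  rw [intervalIntegral.integral_congr (uIcc_of_le ht.1 ▸ h_eq),
    intervalIntegral.integral_comp_sub_left, sub_self, sub_neg_eq_add]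
  refine intervalIntegral.integral_mono_interval le_rfl (by linarith [ht.1]) (by linarith [ht.2])
    ?_ hK_int
  filter_upwards [ae_restrict_mem measurableSet_Ioc] with u hu using hK_nonneg u hu.1

theorem mul_mul_add_sub_le {β e k k' m : ℝ} (hβ : β ≤ 0) (hk' : k' ≤ m) (hm : m ≤ k) :
    β * e * (m + (e - k)) ≤ β / 2 * (e ^ 2 - (k' - k) ^ 2) := by
  have h_sq : (k - m) ^ 2 ≤ (k' - k) ^ 2 := by nlinarith
  nlinarith [sq_nonneg (e - (k - m))]

namespace SolvesResolventEq

variable {K E : ℝ → ℝ} {β : ℝ}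

theorem aestronglyMeasurable (hE : SolvesResolventEq K β E) (hβ : β ≠ 0)
    (hK : CompletelyMonotoneFn K) : AEStronglyMeasurable E (volume.restrict (Ioi 0)) := by
  refine aestronglyMeasurable_of_forall_eq_or_left measurableSet_Ioi
    hK.aestronglyMeasurable fun t ht => ?_
  rw [hE.2 t ht, add_eq_left]
  by_cases hK_pos : ∃ a > 0, 0 < K a
  swap
  · rw [intervalIntegral.integral_of_le (mem_Ioi.1 ht).le, integral_Ioc_eq_integral_Ioo]
    refine .inl (setIntegral_eq_zero_of_forall_eq_zero fun s hs => ?_)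
    have h_pos : 0 < t - s := sub_pos.2 hs.2
    push Not at hK_pos
    rw [le_antisymm (hK_pos _ h_pos) (hK.nonneg h_pos), zero_mul]
  -- An undefined integral is `0`, so only times with an integrable integrand carry information;
  -- there `E` is recovered on the left of `t` by dividing the integrand by `K (t - s) > 0`.
  refine or_iff_not_imp_left.2 fun h_ne => ?_
  have h_int : IntervalIntegrable (fun s => K (t - s) * (β * E s)) volume 0 t :=
    not_imp_comm.1 intervalIntegral.integral_undef h_ne
  obtain ⟨a, ha, hKa⟩ := hK_pos
  have h_sub : Ioo (max 0 (t - a)) t ⊆ Ioo 0 t := Ioo_subset_Ioo_left (le_max_left _ _)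
  have h_refl : AEStronglyMeasurable (fun s => K (t - s)) (volume.restrict (Ioo 0 t)) :=
    (hK.1.continuousOn.comp (by fun_prop) fun s hs => sub_pos.2 hs.2).aestronglyMeasurable
      measurableSet_Ioo
  have h_quot := ((h_int.1.1.mono_set Ioo_subset_Ioc_self).div₀ h_refl).const_mul β⁻¹
  refine ⟨max 0 (t - a), by grind, (h_quot.mono_set h_sub).congr ?_⟩
  filter_upwards [ae_restrict_mem measurableSet_Ioo] with s hs
  have : 0 < K (t - s) :=
    hKa.trans_le (hK.antitoneOn (sub_pos.2 hs.2) ha (by grind))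
  simp only [Pi.div_apply]
  field_simp

theorem memLp_two_Ioc (hE : SolvesResolventEq K β E) (hβ : β ≠ 0)
    (hK : CompletelyMonotoneFn K) {T : ℝ} (hT : 0 < T) :
    MemLp E 2 (volume.restrict (Ioc 0 T)) :=
  (memLp_two_iff_integrable_sq ((hE.aestronglyMeasurable hβ hK).mono_set Ioc_subset_Ioi_self)).2
    (hE.1 T hT).1

theorem intervalIntegrable_convolution (hE : SolvesResolventEq K β E) (hβ : β ≠ 0)
    (hK : CompletelyMonotoneFn K)
    (hK_sq : ∀ T > 0, IntervalIntegrable (fun t => K t ^ 2) volume 0 T) {t : ℝ} (ht : 0 < t) :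
    IntervalIntegrable (fun s => K (t - s) * (β * E s)) volume 0 t := by
  have h_refl : IntervalIntegrable (fun s => K (t - s)) volume 0 t := by
    simpa using ((hK.intervalIntegrable hK_sq le_rfl ht.le).comp_sub_left t).symm
  have h_refl_sq : IntervalIntegrable (fun s => K (t - s) ^ 2) volume 0 t := by
    simpa using ((hK_sq t ht).comp_sub_left t).symm
  rw [intervalIntegrable_iff_integrableOn_Ioc_of_le ht.le]
  exact ((memLp_two_iff_integrable_sq h_refl.1.1).2 h_refl_sq.1).integrable_mul
    ((hE.memLp_two_Ioc hβ hK ht).const_mul β)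

theorem memLp_resolventTest (hE : SolvesResolventEq K β E) (hβ : β ≠ 0)
    (hK : CompletelyMonotoneFn K) {T : ℝ} (hT : 0 < T) :
    MemLp (resolventTest β E) 2 (volume.restrict (Ioc (-1) T)) := by
  have h_one : MemLp (fun _ : ℝ => (1 : ℝ)) 2 (volume.restrict (Ioc (-1) T)) := memLp_const 1
  have h_right := (memLp_indicator_iff_restrict measurableSet_Ioc).2
    ((hE.memLp_two_Ioc hβ hK hT).const_mul β)
  refine ((h_one.indicator (s := Iic 0) measurableSet_Iic).add (h_right.restrict _)).ae_eq ?_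
  filter_upwards [ae_restrict_mem measurableSet_Ioc] with t ht
  by_cases h : t ≤ 0
  · simp [resolventTest, h, h.not_gt]
  · simp [resolventTest, h, not_le.1 h, ht.2]

theorem integral_convolution_resolventTest (hE : SolvesResolventEq K β E) (hβ : β ≠ 0)
    (hK : CompletelyMonotoneFn K)
    (hK_sq : ∀ T > 0, IntervalIntegrable (fun t => K t ^ 2) volume 0 T) {t : ℝ} (ht : 0 < t) :
    ∫ s in -1..t, K (t - s) * resolventTest β E s = (∫ u in t..t + 1, K u) + (E t - K t) := by
  have h_left : EqOn (fun s => K (t - s)) (fun s => K (t - s) * resolventTest β E s)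
      (uIoo (-1) 0) := fun s hs => by
    rw [uIoo_of_le (by norm_num)] at hs
    simp [resolventTest, hs.2.le]
  have h_right : EqOn (fun s => K (t - s) * (β * E s)) (fun s => K (t - s) * resolventTest β E s)
      (uIoo 0 t) := fun s hs => by
    rw [uIoo_of_le ht.le] at hs
    simp [resolventTest, hs.1]
  have h_int_left : IntervalIntegrable (fun s => K (t - s)) volume (-1) 0 := by
    simpa using (hK.intervalIntegrable hK_sq ht.le (le_add_of_nonneg_right one_pos.le)).symm
      |>.comp_sub_left t
  rw [← intervalIntegral.integral_add_adjacent_intervals (b := 0) (h_int_left.congr_uIoo h_left)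
    ((hE.intervalIntegrable_convolution hβ hK hK_sq ht).congr_uIoo h_right),
    ← intervalIntegral.integral_congr_uIoo h_left, ← intervalIntegral.integral_congr_uIoo h_right,
    intervalIntegral.integral_comp_sub_left, hE.2 t ht]
  simp

theorem integral_sq_le (hE : SolvesResolventEq K β E) (hβ : β < 0)
    (hK : CompletelyMonotoneFn K)
    (hK_sq : ∀ T > 0, IntervalIntegrable (fun t => K t ^ 2) volume 0 T)
    {T : ℝ} (hT : 0 < T)
    (hK_diff : IntervalIntegrable (fun t => (K (1 + t) - K t) ^ 2) volume 0 T) :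
    ∫ t in 0..T, E t ^ 2 ≤
      (∫ t in 0..T, (K (1 + t) - K t) ^ 2) + 2 / |β| * ∫ t in 0..1, K t := by
  obtain ⟨ℓ, hℓ, hKℓ⟩ := hK.exists_isConvexKernel
  obtain ⟨h_int, h_nonneg⟩ := hKℓ.integral_mul_convolution_nonneg hℓ (a := -1) (b := T)
    (by linarith) (hK.intervalIntegrable hK_sq le_rfl (by linarith))
    (hE.memLp_resolventTest hβ.ne hK hT)
  set q := fun t => resolventTest β E t * ∫ s in -1..t, K (t - s) * resolventTest β E s
  have h_int_left : IntervalIntegrable q volume (-1) 0 := h_int.mono_set (by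
    rw [uIcc_of_le (by norm_num), uIcc_of_le (by linarith)]
    exact Icc_subset_Icc_right hT.le)
  have h_int_right : IntervalIntegrable q volume 0 T := h_int.mono_set (by
    rw [uIcc_of_le hT.le, uIcc_of_le (by linarith)]
    exact Icc_subset_Icc_left (by norm_num))
  have h_left : ∫ t in -1..0, q t ≤ ∫ u in 0..1, K u := by
    refine (intervalIntegral.integral_mono_on (by norm_num) h_int_left
      (intervalIntegrable_const (c := ∫ u in 0..1, K u)) fun t ht => ?_).trans_eq (by simp)
    have h_one : resolventTest β E t = 1 := if_pos ht.2
    simp only [q, h_one, one_mul]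
    exact integral_convolution_resolventTest_le (hK.intervalIntegrable hK_sq le_rfl zero_le_one)
      (fun u hu => hK.nonneg hu) ht
  have h_right : ∫ t in 0..T, q t ≤
      β / 2 * ((∫ t in 0..T, E t ^ 2) - ∫ t in 0..T, (K (1 + t) - K t) ^ 2) := by
    rw [← intervalIntegral.integral_sub (hE.1 T hT) hK_diff, ← intervalIntegral.integral_const_mul]
    refine intervalIntegral.integral_mono_on_of_le_Ioo hT.le h_int_right
      (((hE.1 T hT).sub hK_diff).const_mul _) fun t ht => ?_
    have h_test : resolventTest β E t = β * E t := if_neg ht.1.not_ge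
    obtain ⟨h_ge, h_le⟩ := hK.integral_mem_Icc ht.1
    simp only [q, h_test, hE.integral_convolution_resolventTest hβ.ne hK hK_sq ht.1]
    exact mul_mul_add_sub_le hβ.le h_ge h_le
  rw [← intervalIntegral.integral_add_adjacent_intervals h_int_left h_int_right] at h_nonneg
  rw [abs_of_neg hβ, ← sub_le_iff_le_add', div_mul_eq_mul_div, le_div_iff₀ (neg_pos.2 hβ)]
  linarith

theorem memLp_two_Ioi (hE : SolvesResolventEq K β E) (hβ : β < 0)
    (hK : CompletelyMonotoneFn K)
    (hK_sq : ∀ T > 0, IntervalIntegrable (fun t => K t ^ 2) volume 0 T)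
    (hK_diff : IntegrableOn (fun t => (K (1 + t) - K t) ^ 2) (Ioi 0)) :
    MemLp E 2 (volume.restrict (Ioi 0)) := by
  rw [memLp_two_iff_integrable_sq (hE.aestronglyMeasurable hβ.ne hK)]
  refine integrableOn_Ioi_of_intervalIntegral_norm_bounded
    ((∫ t in Ioi 0, (K (1 + t) - K t) ^ 2) + 2 / |β| * ∫ t in 0..1, K t) 0
    (l := atTop) (b := id) (fun T => ?_) tendsto_id ?_
  · rcases le_or_gt T 0 with hT | hT
    · simp [Ioc_eq_empty hT.not_gt]
    · exact (hE.1 T hT).1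
  filter_upwards [eventually_gt_atTop 0] with T hT
  have h_diff : IntervalIntegrable (fun t => (K (1 + t) - K t) ^ 2) volume 0 T :=
    (intervalIntegrable_iff_integrableOn_Ioc_of_le hT.le).2 (hK_diff.mono_set Ioc_subset_Ioi_self)
  simp only [Real.norm_of_nonneg (sq_nonneg _), id]
  grw [hE.integral_sq_le hβ hK hK_sq hT h_diff, intervalIntegral.integral_of_le hT.le]
  gcongr
  exacts [Eventually.of_forall fun t => sq_nonneg _, Ioc_subset_Ioi_self]

end SolvesResolventEq

section Autocorrelation

theorem tendsto_integral_Ioi_atTop_zero {E : Type*} [NormedAddCommGroup E] [NormedSpace ℝ E]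
    {μ : Measure ℝ} {f : ℝ → E} {a : ℝ} (hf : IntegrableOn f (Ioi a) μ) :
    Tendsto (fun h => ∫ r in Ioi h, f r ∂μ) atTop (𝓝 0) := by
  have h_empty : ⋂ h : ℝ, Ioi h = ∅ := iInter_eq_empty_iff.2 fun r => ⟨r, self_notMem_Ioi⟩
  simpa [h_empty] using tendsto_setIntegral_of_antitone (s := Ioi) (fun _ => measurableSet_Ioi)
    (fun _ _ => Ioi_subset_Ioi) ⟨a, hf⟩

variable {f g : ℝ → ℝ}

theorem abs_integral_Ioi_comp_add_mul_le (hf : MemLp f 2 (volume.restrict (Ioi 0)))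
    (hg : MemLp g 2 (volume.restrict (Ioi 0))) {h : ℝ} (hh : 0 ≤ h) :
    |∫ r in Ioi 0, f (h + r) * g r| ≤ √(∫ r in Ioi h, f r ^ 2) * √(∫ r in Ioi 0, g r ^ 2) := by
  have h_shift :
      MeasurePreserving (h + ·) (volume.restrict (Ioi 0)) (volume.restrict (Ioi h)) := by
    simpa using (measurePreserving_add_left volume h).restrict_preimage (s := Ioi h)
      measurableSet_Ioi
  have hf_shift : MemLp (fun r => f (h + r)) 2 (volume.restrict (Ioi 0)) :=
    (hf.mono_measure (Measure.restrict_mono_set _ (Ioi_subset_Ioi hh))).comp_measurePreserving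
      h_shift
  rw [← h_shift.integral_comp (measurableEmbedding_addLeft h) (fun r => f r ^ 2)]
  calc |∫ r in Ioi 0, f (h + r) * g r|
      ≤ ∫ r in Ioi 0, ‖f (h + r)‖ * ‖g r‖ := by
        simpa only [norm_mul, Real.norm_eq_abs] using
          norm_integral_le_integral_norm fun r => f (h + r) * g r
    _ ≤ _ := by
        simpa [Real.sqrt_eq_rpow] using integral_mul_norm_le_Lp_mul_Lq (E := ℝ)
          Real.HolderConjugate.two_two (by simpa using hf_shift) (by simpa using hg)

theorem tendsto_integral_Ioi_comp_add_mul (hf : MemLp f 2 (volume.restrict (Ioi 0)))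
    (hg : MemLp g 2 (volume.restrict (Ioi 0))) :
    Tendsto (fun h => ∫ r in Ioi 0, f (h + r) * g r) atTop (𝓝 0) := by
  have h_tail := (tendsto_integral_Ioi_atTop_zero hf.integrable_sq).sqrt.mul_const
    √(∫ r in Ioi 0, g r ^ 2)
  rw [Real.sqrt_zero, zero_mul] at h_tail
  refine squeeze_zero_norm' ?_ h_tail
  filter_upwards [eventually_ge_atTop 0] with h hh using abs_integral_Ioi_comp_add_mul_le hf hg hh

end Autocorrelation

open ProbabilityTheory

section JointlyGaussian

theorem tendsto_of_tendsto_charFunDual {E : Type*} [NormedAddCommGroup E] [NormedSpace ℝ E]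
    [FiniteDimensional ℝ E] [MeasurableSpace E] [BorelSpace E]
    {μ : ℕ → ProbabilityMeasure E} {μ₀ : ProbabilityMeasure E}
    (h : ∀ L : StrongDual ℝ E,
      Tendsto (fun k => charFunDual (μ k : Measure E) L) atTop (𝓝 (charFunDual μ₀ L))) :
    Tendsto μ atTop (𝓝 μ₀) := by
  let e := toEuclidean (E := E)
  have map_symm_map (ν : ProbabilityMeasure E) :
      (ν.map e.continuous.measurable.aemeasurable).map
        e.symm.continuous.measurable.aemeasurable = ν := by
    ext1
    simp only [ProbabilityMeasure.toMeasure_map]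
    rw [Measure.map_map e.symm.continuous.measurable e.continuous.measurable]
    simp
  have charFun_map (ν : ProbabilityMeasure E) (x : EuclideanSpace ℝ (Fin (Module.finrank ℝ E))) :
      charFun ((ν : Measure E).map e) x = charFunDual (ν : Measure E)
        ((InnerProductSpace.toDualMap ℝ _ x).comp e.toContinuousLinearMap) := by
    rw [charFun_eq_charFunDual_toDualMap]
    exact charFunDual_map e.toContinuousLinearMap _
  have h_map : Tendsto (fun k => (μ k).map e.continuous.measurable.aemeasurable) atTop
      (𝓝 (μ₀.map e.continuous.measurable.aemeasurable)) := by
    refine ProbabilityMeasure.tendsto_of_tendsto_charFun fun x => ?_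
    simp only [ProbabilityMeasure.toMeasure_map, charFun_map]
    exact h _
  simpa only [map_symm_map] using
    ProbabilityMeasure.tendsto_map_of_tendsto_of_continuous _ _ h_map e.symm.continuous

variable {Ω E F : Type*} [MeasurableSpace Ω] {P : Measure Ω}
  [NormedAddCommGroup E] [NormedSpace ℝ E] [MeasurableSpace E] [BorelSpace E]
  [NormedAddCommGroup F] [NormedSpace ℝ F] [MeasurableSpace F] [BorelSpace F]

theorem charFunDual_map_prodMk_of_hasGaussianLaw [CompleteSpace E] [CompleteSpace F]
    [SecondCountableTopology E] [SecondCountableTopology F] {X : Ω → E} {Y : Ω → F}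
    (hXY : HasGaussianLaw (fun ω => (X ω, Y ω)) P) (L : StrongDual ℝ (E × F)) :
    charFunDual (P.map fun ω => (X ω, Y ω)) L =
      charFunDual (P.map X) (L.comp (.inl ℝ E F)) * charFunDual (P.map Y) (L.comp (.inr ℝ E F)) *
        Complex.exp (-(cov[L.comp (.inl ℝ E F) ∘ X, L.comp (.inr ℝ E F) ∘ Y; P] : ℝ)) := by
  have := hXY.isProbabilityMeasure
  have hX := hXY.fst.map (L.comp (.inl ℝ E F))
  have hY := hXY.snd.map (L.comp (.inr ℝ E F))
  have hL : L ∘ (fun ω => (X ω, Y ω)) = L.comp (.inl ℝ E F) ∘ X + L.comp (.inr ℝ E F) ∘ Y :=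
    funext fun _ => (L.comp_inl_add_comp_inr _).symm
  rw [hXY.charFunDual_map_eq, hXY.fst.charFunDual_map_eq, hXY.snd.charFunDual_map_eq, hL,
    variance_add hX.memLp_two hY.memLp_two, integral_add' hX.integrable hY.integrable,
    ← Complex.exp_add, ← Complex.exp_add]
  congr 1
  push_cast
  ring

theorem tendsto_integral_prodMk_of_tendsto_covariance [IsProbabilityMeasure P]
    [FiniteDimensional ℝ E] [FiniteDimensional ℝ F] {ι : Type*} {l : Filter ι}
    [l.IsCountablyGenerated] {X : Ω → E} {Y : ι → Ω → F} {ν : Measure F} [IsProbabilityMeasure ν]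
    (hX : AEMeasurable X P) (hXY : ∀ i, HasGaussianLaw (fun ω => (X ω, Y i ω)) P)
    (hν : ∀ i, P.map (Y i) = ν)
    (hcov : ∀ (L₁ : StrongDual ℝ E) (L₂ : StrongDual ℝ F),
      Tendsto (fun i => cov[L₁ ∘ X, L₂ ∘ Y i; P]) l (𝓝 0))
    (f : BoundedContinuousFunction (E × F) ℝ) :
    Tendsto (fun i => ∫ ω, f (X ω, Y i ω) ∂P) l (𝓝 (∫ z, f z ∂(P.map X).prod ν)) := by
  have : CompleteSpace E := FiniteDimensional.complete ℝ E
  have : CompleteSpace F := FiniteDimensional.complete ℝ F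
  have : ProperSpace E := FiniteDimensional.proper ℝ E
  have : ProperSpace F := FiniteDimensional.proper ℝ F
  have : IsProbabilityMeasure (P.map X) := Measure.isProbabilityMeasure_map hX
  rw [tendsto_iff_seq_tendsto]
  intro u hu
  let μ (k : ℕ) : ProbabilityMeasure (E × F) := ⟨P.map fun ω => (X ω, Y (u k) ω),
    Measure.isProbabilityMeasure_map (hXY _).aemeasurable⟩
  let μ₀ : ProbabilityMeasure (E × F) := ⟨(P.map X).prod ν, inferInstance⟩
  have hμ : Tendsto μ atTop (𝓝 μ₀) := by
    refine tendsto_of_tendsto_charFunDual fun L => ?_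
    have h_exp : Tendsto (fun k => Complex.exp
        (-(cov[L.comp (.inl ℝ E F) ∘ X, L.comp (.inr ℝ E F) ∘ Y (u k); P] : ℝ))) atTop (𝓝 1) := by
      have := (hcov (L.comp (.inl ℝ E F)) (L.comp (.inr ℝ E F))).comp hu
      simpa using this.ofReal.neg.cexp
    simp only [μ, μ₀, ProbabilityMeasure.coe_mk, charFunDual_prod,
      charFunDual_map_prodMk_of_hasGaussianLaw (hXY _), hν]
    simpa using h_exp.const_mul _
  refine (ProbabilityMeasure.tendsto_iff_forall_integral_tendsto.1 hμ f).congr fun k => ?_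
  exact integral_map (hXY _).aemeasurable f.continuous.measurable.aestronglyMeasurable

end JointlyGaussian

theorem dual_pi_apply {ι : Type*} [Fintype ι] [DecidableEq ι] (L : StrongDual ℝ (ι → ℝ))
    (x : ι → ℝ) : L x = ∑ i, L (Pi.single i 1) * x i := by
  conv_lhs => rw [pi_eq_sum_univ' x]
  simp [mul_comm, map_sum]

theorem covariance_dual_comp_pi {Ω ι κ : Type*} [MeasurableSpace Ω] {P : Measure Ω}
    [IsFiniteMeasure P] [Fintype ι] [DecidableEq ι] [Fintype κ] [DecidableEq κ]
    {X : ι → Ω → ℝ} {Y : κ → Ω → ℝ} (hX : ∀ i, MemLp (X i) 2 P) (hY : ∀ j, MemLp (Y j) 2 P)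
    (L₁ : StrongDual ℝ (ι → ℝ)) (L₂ : StrongDual ℝ (κ → ℝ)) :
    cov[L₁ ∘ fun ω i => X i ω, L₂ ∘ fun ω j => Y j ω; P] =
      ∑ i, ∑ j, L₁ (Pi.single i 1) * L₂ (Pi.single j 1) * cov[X i, Y j; P] := by
  simp only [Function.comp_def, dual_pi_apply L₁ (fun i => X i _),
    dual_pi_apply L₂ (fun j => Y j _)]
  rw [covariance_fun_sum_fun_sum (fun i => (hX i).const_mul _) fun j => (hY j).const_mul _]
  simp only [covariance_const_mul_left, covariance_const_mul_right, mul_assoc, mul_left_comm]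

namespace IsGaussianProcessOn

variable {Ω : Type*} [MeasurableSpace Ω] {P : Measure Ω} {S : Set ℝ} {X : ℝ → Ω → ℝ}
  {m : ℝ → ℝ} {c : ℝ → ℝ → ℝ}

theorem measurable_pi (hX : IsGaussianProcessOn P S X m c) {ι : Type*} (t : ι → ℝ) :
    Measurable fun ω i => X (t i) ω :=
  measurable_pi_lambda _ fun i => hX.1 (t i)

theorem map_map_dual (hX : IsGaussianProcessOn P S X m c) {n : ℕ} {t : Fin n → ℝ}
    (ht : ∀ i, t i ∈ S) (L : StrongDual ℝ (Fin n → ℝ)) :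
    (P.map fun ω i => X (t i) ω).map L = gaussianReal (∑ i, L (Pi.single i 1) * m (t i))
      (∑ i, ∑ j, L (Pi.single i 1) * L (Pi.single j 1) * c (t i) (t j)).toNNReal := by
  rw [Measure.map_map L.continuous.measurable (hX.measurable_pi t), ← hX.2 n t _ ht]
  congr 1 with ω
  simp [dual_pi_apply L fun i => X (t i) ω]

theorem hasGaussianLaw (hX : IsGaussianProcessOn P S X m c) {n : ℕ} {t : Fin n → ℝ}
    (ht : ∀ i, t i ∈ S) : HasGaussianLaw (fun ω i => X (t i) ω) P :=
  ⟨isGaussian_of_map_eq_gaussianReal fun L => ⟨_, _, hX.map_map_dual ht L⟩⟩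

theorem hasGaussianLaw_prodMk (hX : IsGaussianProcessOn P S X m c) {n N : ℕ} {t : Fin n → ℝ}
    {s : Fin N → ℝ} (ht : ∀ i, t i ∈ S) (hs : ∀ j, s j ∈ S) :
    HasGaussianLaw (fun ω => ((fun i => X (t i) ω), fun j => X (s j) ω)) P := by
  have happend : ∀ k, Fin.append t s k ∈ S := Fin.addCases (by simpa using ht) (by simpa using hs)
  let split : (Fin (n + N) → ℝ) →L[ℝ] (Fin n → ℝ) × (Fin N → ℝ) :=
    (ContinuousLinearMap.pi fun i => .proj (Fin.castAdd N i)).prod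
      (ContinuousLinearMap.pi fun j => .proj (Fin.natAdd n j))
  simpa [split, Function.comp_def] using (hX.hasGaussianLaw happend).map_fun split

theorem memLp_two (hX : IsGaussianProcessOn P S X m c) {t : ℝ} (ht : t ∈ S) :
    MemLp (X t) 2 P :=
  ((hX.hasGaussianLaw (t := fun _ : Fin 1 => t) fun _ => ht).eval 0).memLp_two

theorem map_eq_of_mean_of_covariance (hX : IsGaussianProcessOn P S X m c) {n : ℕ}
    {t t' : Fin n → ℝ} (ht : ∀ i, t i ∈ S) (ht' : ∀ i, t' i ∈ S)
    (hm : ∀ i, m (t' i) = m (t i)) (hc : ∀ i j, c (t' i) (t' j) = c (t i) (t j)) :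
    P.map (fun ω i => X (t' i) ω) = P.map fun ω i => X (t i) ω := by
  have := (hX.hasGaussianLaw ht).isProbabilityMeasure
  refine Measure.ext_of_charFunDual ?_
  ext L
  rw [charFunDual_eq_charFun_map_one, charFunDual_eq_charFun_map_one, hX.map_map_dual ht,
    hX.map_map_dual ht']
  simp only [hm, hc]

theorem variance_fun_sum_mul (hX : IsGaussianProcessOn P S X m c) {n : ℕ} {t : Fin n → ℝ}
    (ht : ∀ i, t i ∈ S) (a : Fin n → ℝ) :
    Var[fun ω => ∑ i, a i * X (t i) ω; P] =
      (∑ i, ∑ j, a i * a j * c (t i) (t j)).toNNReal := by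
  have h_meas : Measurable fun ω => ∑ i, a i * X (t i) ω :=
    Finset.measurable_sum _ fun i _ => (hX.1 (t i)).const_mul _
  rw [← variance_id_map h_meas.aemeasurable, hX.2 n t a ht, variance_id_gaussianReal]

-- The truncations by `0` come from the `Real.toNNReal` in `IsGaussianProcessOn`.
theorem two_mul_covariance [IsFiniteMeasure P] (hX : IsGaussianProcessOn P S X m c) {s t : ℝ}
    (hs : s ∈ S) (ht : t ∈ S) :
    2 * cov[X s, X t; P] = max (c s s + c s t + (c t s + c t t)) 0 -
      max (c s s) 0 - max (c t t) 0 := by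
  have h_var {t : ℝ} (ht : t ∈ S) : Var[X t; P] = max (c t t) 0 := by
    simpa using hX.variance_fun_sum_mul (t := fun _ : Fin 1 => t) (fun _ => ht) 1
  have h_sum := hX.variance_fun_sum_mul (t := ![s, t]) (by simp [Fin.forall_fin_two, hs, ht]) 1
  simp only [Fin.sum_univ_two, Matrix.cons_val_zero, Matrix.cons_val_one, Pi.one_apply, one_mul,
    variance_fun_add (hX.memLp_two hs) (hX.memLp_two ht), h_var hs, h_var ht,
    Real.coe_toNNReal'] at h_sum
  linarith

variable {m : ℝ} {g : ℝ → ℝ}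

theorem tendsto_covariance_add [IsFiniteMeasure P]
    (hX : IsGaussianProcessOn P univ X (fun _ => m) (fun s t => g |t - s|))
    (hg : Tendsto g atTop (𝓝 0)) (s t : ℝ) :
    Tendsto (fun h => cov[X t, X (s + h); P]) atTop (𝓝 0) := by
  have h_lag : Tendsto (fun h : ℝ => |s + h - t|) atTop atTop :=
    tendsto_abs_atTop_atTop.comp <| tendsto_atTop_add_const_right _ (-t) <|
      tendsto_atTop_add_const_left _ s tendsto_id
  let φ (x : ℝ) : ℝ := (max (2 * (g 0 + x)) 0 - 2 * max (g 0) 0) / 2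
  have h_cov (h : ℝ) : cov[X t, X (s + h); P] = φ (g |s + h - t|) := by
    have := hX.two_mul_covariance (mem_univ t) (mem_univ (s + h))
    simp only [sub_self, abs_zero, abs_sub_comm t] at this
    rw [show g 0 + g |s + h - t| + (g |s + h - t| + g 0) = 2 * (g 0 + g |s + h - t|) by ring]
      at this
    simp only [φ]
    linarith
  have hφ : Tendsto φ (𝓝 0) (𝓝 0) :=
    Continuous.tendsto' (by fun_prop) _ _ (by simp [φ, mul_max_of_nonneg])
  simpa only [h_cov, Function.comp_def] using hφ.comp (hg.comp h_lag)

theorem tendsto_integral_prodMk_add [IsProbabilityMeasure P]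
    (hX : IsGaussianProcessOn P univ X (fun _ => m) (fun s t => g |t - s|))
    (hg : Tendsto g atTop (𝓝 0)) {n N : ℕ} (t : Fin n → ℝ) (s : Fin N → ℝ)
    (F : BoundedContinuousFunction ((Fin n → ℝ) × (Fin N → ℝ)) ℝ) :
    Tendsto (fun h => ∫ ω, F (fun i => X (t i) ω, fun j => X (s j + h) ω) ∂P) atTop
      (𝓝 (∫ z, F z ∂(P.map fun ω i => X (t i) ω).prod (P.map fun ω j => X (s j) ω))) := by
  have : IsProbabilityMeasure (P.map fun ω j => X (s j) ω) :=
    Measure.isProbabilityMeasure_map (hX.measurable_pi s).aemeasurable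
  refine tendsto_integral_prodMk_of_tendsto_covariance (hX.measurable_pi t).aemeasurable
    (fun h => hX.hasGaussianLaw_prodMk (by simp) (by simp))
    (fun h => hX.map_eq_of_mean_of_covariance (by simp) (by simp) (by simp) (by simp))
    (fun L₁ L₂ => ?_) F
  have h_memLp (t : ℝ) : MemLp (X t) 2 P := hX.memLp_two (mem_univ t)
  simp only [covariance_dual_comp_pi (fun i => h_memLp (t i)) (fun j => h_memLp (s j + _))]
  rw [show (0 : ℝ) = ∑ i, ∑ j, L₁ (Pi.single i 1) * L₂ (Pi.single j 1) * 0 by simp]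
  exact tendsto_finsetSum _ fun i _ => tendsto_finsetSum _ fun j _ =>
    (hX.tendsto_covariance_add hg (s j) (t i)).const_mul _

end IsGaussianProcessOn

theorem VOU_stationary_asymptotic_factorization_general {K E : ℝ → ℝ} {β : ℝ} (hβ : β < 0)
    (hK : CompletelyMonotoneFn K)
    (hK_sq : ∀ T > 0, IntervalIntegrable (fun t => K t ^ 2) volume 0 T)
    (hK_diff : IntegrableOn (fun t => (K (1 + t) - K t) ^ 2) (Ioi 0))
    (hE : SolvesResolventEq K β E) {Ω : Type*} [MeasurableSpace Ω] {P : Measure Ω}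
    [IsProbabilityMeasure P] {X : ℝ → Ω → ℝ} {m σ : ℝ}
    (hX : IsGaussianProcessOn P univ X (fun _ => m)
      (fun s t => σ ^ 2 * ∫ r in Ioi 0, E (|t - s| + r) * E r))
    {n N : ℕ} (t : Fin n → ℝ) (s : Fin N → ℝ)
    (F : BoundedContinuousFunction ((Fin n → ℝ) × (Fin N → ℝ)) ℝ) :
    Tendsto (fun h => ∫ ω, F (fun i => X (t i) ω, fun j => X (s j + h) ω) ∂P) atTop
      (𝓝 (∫ z, F z ∂(P.map fun ω i => X (t i) ω).prod (P.map fun ω j => X (s j) ω))) := by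
  have hE_memLp : MemLp E 2 (volume.restrict (Ioi 0)) := hE.memLp_two_Ioi hβ hK hK_sq hK_diff
  have h_cov : Tendsto (fun h => σ ^ 2 * ∫ r in Ioi 0, E (h + r) * E r) atTop (𝓝 0) := by
    simpa using (tendsto_integral_Ioi_comp_add_mul hE_memLp hE_memLp).const_mul (σ ^ 2)
  exact hX.tendsto_integral_prodMk_add h_cov t s F

/-- Asymptotic factorization of the finite-dimensional
distributions of the stationary VOU process: as `h → ∞`,
`(X^stat_{t₁},…,X^stat_{t_n}, X^stat_{s₁+h},…,X^stat_{s_N+h})` converges weakly to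
the product of the laws of `(X^stat_{t₁},…,X^stat_{t_n})` and of an independent copy
`(X̄_{s₁},…,X̄_{s_N})`. -/
theorem VOU_stationary_asymptotic_factorization
    (K : ℝ → ℝ) (γ x₀ σ b β : ℝ) (hσ : 0 < σ) (hβ : β < 0)
    (hVOU : AssumptionVOUKernel K γ)
    (E : ℝ → ℝ → ℝ)
    (hE : ∀ β' < (0:ℝ), SolvesResolventEq K β' (E β'))
    {Ω : Type*} [MeasurableSpace Ω] (P : Measure Ω) [IsProbabilityMeasure P]
    (Xstat : ℝ → Ω → ℝ)
    (hXstat : IsGaussianProcessOn P Set.univ Xstat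
      (fun _ => m1VOU K x₀ b β) (covStatVOU E σ β)) :
    ∀ (n N : ℕ) (t : Fin n → ℝ) (s : Fin N → ℝ),
      (∀ i, 0 ≤ t i) → StrictMono t → (∀ j, 0 ≤ s j) → StrictMono s →
      ∀ F : BoundedContinuousFunction ((Fin n → ℝ) × (Fin N → ℝ)) ℝ,
        Tendsto
          (fun h : ℝ => ∫ ω, F (fun i => Xstat (t i) ω, fun j => Xstat (s j + h) ω) ∂P)
          atTop
          (nhds (∫ z, F z ∂((Measure.map (fun ω => fun i : Fin n => Xstat (t i) ω) P).prod
            (Measure.map (fun ω => fun j : Fin N => Xstat (s j) ω) P)))) := by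
  obtain ⟨-, hK, hK_sq, -, Cγ, hCγ⟩ := hVOU
  exact fun n N t s _ _ _ _ => VOU_stationary_asymptotic_factorization_general hβ hK hK_sq
    (by simpa using (hCγ 0 1 le_rfl zero_le_one (by norm_num)).1) (hE β hβ) hXstat t s

end
end

section
/- Let K_α(t) = t^{α−1}/Γ(α) be the fractional Riemann–Liouville kernel with α ∈ (1/2,1), let β < 0, and let E_β ∈ L²_loc(ℝ₊) be the unique solution of E_β(t) = K_α(t) + ∫₀^t K_α(t−s) β E_β(s) ds. Then ∫₀^∞ E_β(t)² dt = C_α |β|^{1/α − 2}, where C_α = (1/π) ∫₀^∞ du / (1 + 2u^α cos(πα/2) + u^{2α}). -/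
open MeasureTheory Set Filter Real
open scoped ENNReal NNReal Topology

noncomputable section

/-- The fractional Riemann–Liouville kernel `K_α(t) = t^{α-1}/Γ(α)`. -/
noncomputable def fractionalKernel (α t : ℝ) : ℝ := t ^ (α - 1) / Real.Gamma α

/-!
Damping `E` by `e^{-lt}` turns the Volterra equation into `f + |β| f ⋆ k = k`, where `k` is the
damped kernel, whose Fourier transform `(l + 2πiy)^{-α}` has nonnegative real part. This positivity
gives the energy estimate `‖f‖₂ ≤ ‖k‖₂`, first for the truncations of `E` and then for `E` itself,
so that Plancherel applies: `∫₀^∞ e^{-2lt} E² = ∫ |(l + 2πiy)^α + |β||⁻² dy`. Rescaling pulls out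
`|β|^{1/α - 2}`; as `l → 0⁺` the right side converges by domination, and the left side by Fatou and
domination.
-/

open scoped FourierTransform InnerProductSpace Convolution

section Plancherel

variable {V F : Type*} [NormedAddCommGroup V] [InnerProductSpace ℝ V] [FiniteDimensional ℝ V]
  [MeasurableSpace V] [BorelSpace V] [NormedAddCommGroup F] [InnerProductSpace ℂ F]
  [CompleteSpace F] {f g : V → F}

open scoped SchwartzMap in
lemma fourier_ae_eq_fourier_toLp (hf : Integrable f) (hf2 : MemLp f 2) :
    𝓕 f =ᵐ[volume] (𝓕 (hf2.toLp f) : Lp F 2 (volume : Measure V)) := by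
  -- Both sides define the same tempered distribution.
  have hcont : Continuous (𝓕 f) :=
    VectorFourier.fourierIntegral_continuous continuous_fourierChar continuous_inner hf
  refine ae_eq_of_integral_contDiff_smul_eq hcont.locallyIntegrable
    ((Lp.memLp _).locallyIntegrable one_le_two) fun g hg hgs ↦ ?_
  have hgs' : HasCompactSupport fun x ↦ (g x : ℂ) := hgs.comp_left (g := ((↑) : ℝ → ℂ)) rfl
  let φ : 𝓢(V, ℂ) := hgs'.toSchwartzMap (Complex.ofRealCLM.contDiff.comp hg)
  have hφ (x : V) (v : F) : φ x • v = g x • v := Complex.coe_smul (g x) v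
  calc ∫ x, g x • 𝓕 f x = ∫ x, φ x • 𝓕 f x := by simp only [hφ]
    _ = ∫ x, 𝓕 φ x • f x := by
      have h := VectorFourier.integral_fourierIntegral_smul_eq_flip (L := innerₗ V)
        (μ := volume) (ν := volume) continuous_fourierChar continuous_inner φ.integrable hf
      rw [flip_innerₗ] at h
      exact h.symm
    _ = ∫ x, 𝓕 φ x • hf2.toLp f x :=
      integral_congr_ae (hf2.coeFn_toLp.mono fun x hx ↦ by simp only [hx])
    _ = ∫ x, φ x • (𝓕 (hf2.toLp f) : Lp F 2 (volume : Measure V)) x := by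
      simpa using (DFunLike.congr_fun (Lp.fourier_toTemperedDistribution_eq (hf2.toLp f)) φ)
    _ = _ := by simp only [hφ]

lemma memLp_two_fourier (hf : Integrable f) (hf2 : MemLp f 2) : MemLp (𝓕 f) 2 :=
  (memLp_congr_ae (fourier_ae_eq_fourier_toLp hf hf2)).2 (Lp.memLp _)

lemma integral_inner_fourier_eq (hf : Integrable f) (hf2 : MemLp f 2) (hg : Integrable g)
    (hg2 : MemLp g 2) : ∫ ξ, ⟪𝓕 f ξ, 𝓕 g ξ⟫_ℂ = ∫ x, ⟪f x, g x⟫_ℂ :=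
  calc ∫ ξ, ⟪𝓕 f ξ, 𝓕 g ξ⟫_ℂ = ⟪𝓕 (hf2.toLp f), 𝓕 (hg2.toLp g)⟫_ℂ := by
        rw [L2.inner_def]
        refine integral_congr_ae ?_
        filter_upwards [fourier_ae_eq_fourier_toLp hf hf2, fourier_ae_eq_fourier_toLp hg hg2]
          with ξ hfξ hgξ
        rw [hfξ, hgξ]
    _ = ⟪hf2.toLp f, hg2.toLp g⟫_ℂ := Lp.inner_fourier_eq _ _
    _ = ∫ x, ⟪f x, g x⟫_ℂ := by
        rw [L2.inner_def]
        refine integral_congr_ae ?_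
        filter_upwards [hf2.coeFn_toLp, hg2.coeFn_toLp] with x hfx hgx
        rw [hfx, hgx]

lemma integral_norm_sq_fourier_eq (hf : Integrable f) (hf2 : MemLp f 2) :
    ∫ ξ, ‖𝓕 f ξ‖ ^ 2 = ∫ x, ‖f x‖ ^ 2 := by
  have h := integral_inner_fourier_eq hf hf2 hf hf2
  simp only [inner_self_eq_norm_sq_to_K] at h
  exact_mod_cast h

end Plancherel

section ConvolutionEnergy

variable {V : Type*} [NormedAddCommGroup V] [InnerProductSpace ℝ V] [FiniteDimensional ℝ V]
  [MeasurableSpace V] [BorelSpace V] {f k : V → ℂ}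

lemma norm_convolution_le_add_integral_norm_sq (hf : MemLp f 2) (hk : MemLp k 2) (x : V) :
    ‖(f ⋆[ContinuousLinearMap.mul ℂ ℂ] k) x‖ ≤ (∫ y, ‖f y‖ ^ 2) + ∫ y, ‖k y‖ ^ 2 := by
  have hf' : Integrable fun y ↦ ‖f y‖ ^ 2 := (memLp_two_iff_integrable_sq_norm hf.1).1 hf
  have hk' : Integrable fun y ↦ ‖k (x - y)‖ ^ 2 :=
    ((memLp_two_iff_integrable_sq_norm hk.1).1 hk).comp_sub_left x
  rw [convolution_mul, ← integral_sub_left_eq_self (fun y ↦ ‖k y‖ ^ 2) volume x,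
    ← integral_add hf' hk']
  refine norm_integral_le_of_norm_le (hf'.add hk') (Eventually.of_forall fun y ↦ ?_)
  rw [norm_mul]
  nlinarith [sq_nonneg (‖f y‖ - ‖k (x - y)‖), sq_nonneg ‖f y‖, sq_nonneg ‖k (x - y)‖]

lemma memLp_two_convolution (hf : Integrable f) (hf2 : MemLp f 2) (hk : Integrable k)
    (hk2 : MemLp k 2) : MemLp (f ⋆[ContinuousLinearMap.mul ℂ ℂ] k) 2 := by
  have hfk := hf.integrable_convolution (ContinuousLinearMap.mul ℂ ℂ) hk
  rw [memLp_two_iff_integrable_sq_norm hfk.1]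
  simp only [sq]
  exact hfk.norm.bdd_mul hfk.1.norm (Eventually.of_forall fun x ↦ by
    simpa using norm_convolution_le_add_integral_norm_sq hf2 hk2 x)

lemma integrable_inner_of_memLp_two {g : V → ℂ} (hf : MemLp f 2) (hg : MemLp g 2) :
    Integrable fun x ↦ ⟪f x, g x⟫_ℂ := by
  refine (L2.integrable_inner (𝕜 := ℂ) (hf.toLp f) (hg.toLp g)).congr ?_
  filter_upwards [hf.coeFn_toLp, hg.coeFn_toLp] with x hfx hgx
  rw [hfx, hgx]

lemma re_integral_inner_convolution_nonneg (hf : Integrable f) (hf2 : MemLp f 2)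
    (hk : Integrable k) (hk2 : MemLp k 2) (hpos : ∀ ξ, 0 ≤ (𝓕 k ξ).re) :
    0 ≤ (∫ x, ⟪f x, (f ⋆[ContinuousLinearMap.mul ℂ ℂ] k) x⟫_ℂ).re := by
  have hfk := hf.integrable_convolution (ContinuousLinearMap.mul ℂ ℂ) hk
  have hfk2 := memLp_two_convolution hf hf2 hk hk2
  rw [← integral_inner_fourier_eq hf hf2 hfk hfk2]
  refine (integral_nonneg fun ξ ↦ ?_).trans_eq (integral_re (integrable_inner_of_memLp_two
    (memLp_two_fourier hf hf2) (memLp_two_fourier hfk hfk2)))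
  have h : ⟪𝓕 f ξ, 𝓕 f ξ * 𝓕 k ξ⟫_ℂ = (‖𝓕 f ξ‖ ^ 2 : ℝ) * 𝓕 k ξ := by
    rw [RCLike.inner_apply', ← mul_assoc, mul_comm (starRingEnd ℂ _), RCLike.mul_conj]
    norm_cast
  rw [Real.fourier_mul_convolution_eq hf hk, h]
  exact (mul_nonneg (sq_nonneg _) (hpos ξ)).trans_eq (Complex.re_ofReal_mul _ _).symm

/- Where `f ≠ 0`, expand `‖k‖² = ‖f + b • (f ⋆ k)‖²`: the cross term has nonnegative integral. -/
lemma integral_norm_sq_le_of_add_convolution_eq {b : ℝ} (hb : 0 ≤ b) (hf : Integrable f)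
    (hf2 : MemLp f 2) (hk : Integrable k) (hk2 : MemLp k 2) (hpos : ∀ ξ, 0 ≤ (𝓕 k ξ).re)
    (heq : ∀ x, f x ≠ 0 → f x + b * (f ⋆[ContinuousLinearMap.mul ℂ ℂ] k) x = k x) :
    ∫ x, ‖f x‖ ^ 2 ≤ ∫ x, ‖k x‖ ^ 2 := by
  set h := f ⋆[ContinuousLinearMap.mul ℂ ℂ] k
  have hf' := (memLp_two_iff_integrable_sq_norm hf2.1).1 hf2
  have hk' := (memLp_two_iff_integrable_sq_norm hk2.1).1 hk2
  have hfh : Integrable fun x ↦ ⟪f x, h x⟫_ℂ :=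
    integrable_inner_of_memLp_two hf2 (memLp_two_convolution hf hf2 hk hk2)
  have hpos' : 0 ≤ ∫ x, (⟪f x, h x⟫_ℂ).re :=
    (re_integral_inner_convolution_nonneg hf hf2 hk hk2 hpos).trans_eq (integral_re hfh).symm
  have hpoint (x : V) : ‖f x‖ ^ 2 + 2 * b * (⟪f x, h x⟫_ℂ).re ≤ ‖k x‖ ^ 2 := by
    by_cases hfx : f x = 0
    · simp [hfx]
    have hk_sq : ‖k x‖ ^ 2 = ‖f x‖ ^ 2 + 2 * b * (⟪f x, h x⟫_ℂ).re + ‖b * h x‖ ^ 2 := by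
      rw [← heq x hfx, norm_add_sq (𝕜 := ℂ), ← smul_eq_mul (b : ℂ), inner_smul_right]
      simp [mul_assoc]
    linarith [sq_nonneg ‖b * h x‖]
  have hint : Integrable fun x ↦ 2 * b * (⟪f x, h x⟫_ℂ).re := hfh.re.const_mul _
  have h_le : ∫ x, (‖f x‖ ^ 2 + 2 * b * (⟪f x, h x⟫_ℂ).re) ≤ ∫ x, ‖k x‖ ^ 2 :=
    integral_mono (hf'.add hint) hk' hpoint
  rw [integral_add hf' hint, integral_const_mul] at h_le
  exact (le_add_of_nonneg_right (by positivity)).trans h_le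

lemma fourier_add_smul_convolution (hf : Integrable f) (hk : Integrable k) (c : ℂ) (ξ : V) :
    𝓕 (f + c • (f ⋆[ContinuousLinearMap.mul ℂ ℂ] k)) ξ = 𝓕 f ξ * (1 + c * 𝓕 k ξ) := by
  have hfk := hf.integrable_convolution (ContinuousLinearMap.mul ℂ ℂ) hk
  calc 𝓕 (f + c • (f ⋆[ContinuousLinearMap.mul ℂ ℂ] k)) ξ
      = 𝓕 f ξ + c • 𝓕 (f ⋆[ContinuousLinearMap.mul ℂ ℂ] k) ξ := by
        simp only [Real.fourier_eq, Pi.add_apply, Pi.smul_apply, smul_add, smul_comm _ c,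
          ← integral_smul]
        exact integral_add ((fourierIntegral_convergent_iff ξ).2 hf)
          (((fourierIntegral_convergent_iff ξ).2 hfk).smul c)
    _ = 𝓕 f ξ * (1 + c * 𝓕 k ξ) := by
        rw [Real.fourier_mul_convolution_eq hf hk, smul_eq_mul]
        ring

end ConvolutionEnergy

section LaplaceTransform

variable {a z : ℂ}

lemma integrableOn_rpow_mul_exp_neg_mul {s l : ℝ} (hs : -1 < s) (hl : 0 < l) :
    IntegrableOn (fun t : ℝ ↦ t ^ s * Real.exp (-(l * t))) (Ioi 0) := by
  simpa using integrableOn_rpow_mul_exp_neg_mul_rpow hs one_pos hl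

lemma norm_cpow_mul_cexp_neg_mul (a z : ℂ) {t : ℝ} (ht : 0 < t) :
    ‖(t : ℂ) ^ a * Complex.exp (-(z * t))‖ = t ^ a.re * Real.exp (-(z.re * t)) := by
  simp [Complex.norm_cpow_eq_rpow_re_of_pos ht, Complex.norm_exp]

lemma aestronglyMeasurable_cpow_mul_cexp_neg_mul (a z : ℂ) :
    AEStronglyMeasurable (fun t : ℝ ↦ (t : ℂ) ^ a * Complex.exp (-(z * t)))
      (volume.restrict (Ioi 0)) :=
  (by fun_prop : Measurable _).aestronglyMeasurable

lemma integrableOn_cpow_mul_cexp_neg_mul (ha : -1 < a.re) (hz : 0 < z.re) :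
    IntegrableOn (fun t : ℝ ↦ (t : ℂ) ^ a * Complex.exp (-(z * t))) (Ioi 0) :=
  (integrableOn_rpow_mul_exp_neg_mul ha hz).mono' (aestronglyMeasurable_cpow_mul_cexp_neg_mul a z)
    ((ae_restrict_mem measurableSet_Ioi).mono fun _ ht ↦ (norm_cpow_mul_cexp_neg_mul a z ht).le)

lemma differentiableOn_integral_cpow_mul_cexp_neg_mul (ha : -1 < a.re) :
    DifferentiableOn ℂ (fun z : ℂ ↦ ∫ t in Ioi (0 : ℝ), (t : ℂ) ^ a * Complex.exp (-(z * t)))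
      {z | 0 < z.re} := by
  intro z (hz : 0 < z.re)
  have hderiv (t : ℝ) (w : ℂ) : HasDerivAt (fun w : ℂ ↦ (t : ℂ) ^ a * Complex.exp (-(w * t)))
      ((t : ℂ) ^ a * (Complex.exp (-(w * t)) * -t)) w := by
    simpa using (((hasDerivAt_id w).mul_const (t : ℂ)).neg.cexp.const_mul ((t : ℂ) ^ a))
  refine (hasDerivAt_integral_of_dominated_loc_of_deriv_le
    (bound := fun t ↦ t ^ (a.re + 1) * Real.exp (-(z.re / 2 * t)))
    (s := {w : ℂ | z.re / 2 < w.re})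
    ((isOpen_lt continuous_const Complex.continuous_re).mem_nhds (half_lt_self hz))
    (Eventually.of_forall fun w ↦ aestronglyMeasurable_cpow_mul_cexp_neg_mul a w)
    (integrableOn_cpow_mul_cexp_neg_mul ha hz)
    (by fun_prop : Measurable _).aestronglyMeasurable ?_
    (integrableOn_rpow_mul_exp_neg_mul (by linarith) (half_pos hz))
    (Eventually.of_forall fun t w _ ↦ hderiv t w)).2.differentiableAt.differentiableWithinAt
  filter_upwards [ae_restrict_mem measurableSet_Ioi] with t (ht : 0 < t) w hw
  rw [← mul_assoc, norm_mul, norm_cpow_mul_cexp_neg_mul a w ht, norm_neg,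
    Complex.norm_of_nonneg ht.le, mul_right_comm, ← Real.rpow_add_one ht.ne']
  gcongr

/- Both sides are holomorphic in `z` on the right half-plane and agree for real `z`. -/
lemma integral_cpow_mul_cexp_neg_mul_Ioi (ha : 0 < a.re) (hz : 0 < z.re) :
    ∫ t in Ioi (0 : ℝ), (t : ℂ) ^ (a - 1) * Complex.exp (-(z * t)) =
      (1 / z) ^ a * Complex.Gamma a := by
  have hopen : IsOpen {w : ℂ | 0 < w.re} := isOpen_lt continuous_const Complex.continuous_re
  have hleft := (differentiableOn_integral_cpow_mul_cexp_neg_mul (a := a - 1)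
    (by simpa using ha)).analyticOnNhd hopen
  have hright : AnalyticOnNhd ℂ (fun w : ℂ ↦ (1 / w) ^ a * Complex.Gamma a) {w | 0 < w.re} := by
    refine DifferentiableOn.analyticOnNhd (fun w (hw : 0 < w.re) ↦ ?_) hopen
    have hw0 : w ≠ 0 := by rintro rfl; simp at hw
    have hw' : 1 / w ∈ Complex.slitPlane := by
      refine Or.inl ?_
      rw [one_div, Complex.inv_re]
      exact div_pos hw (Complex.normSq_pos.2 hw0)
    exact (((differentiableAt_const 1).div differentiableAt_id hw0).cpow_const hw'
      |>.mul_const _).differentiableWithinAt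
  refine hleft.eqOn_of_preconnected_of_frequently_eq hright
    (convex_halfSpace_re_gt 0).isPreconnected (z₀ := 1) (by simp) ?_ hz
  have hofReal : Tendsto ((↑) : ℝ → ℂ) (𝓝[≠] 1) (𝓝[≠] 1) :=
    Complex.continuous_ofReal.continuousAt.continuousWithinAt.tendsto_nhdsWithin
      fun l hl ↦ by simpa using hl
  refine hofReal.frequently (Eventually.frequently ?_)
  filter_upwards [nhdsWithin_le_nhds (Ioi_mem_nhds zero_lt_one)] with l hl
  exact Complex.integral_cpow_mul_exp_neg_mul_Ioi ha hl

end LaplaceTransform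

section Damped

variable {f k : ℝ → ℝ} {l l' t : ℝ}

/-- The exponentially damped restriction `t ↦ e^{-lt} f(t)` of `f` to the open half-line, extended
by zero to `ℝ` and viewed as complex-valued: its Fourier transform is the Laplace transform of `f`
on the line `Re z = l`. -/
def damped (l : ℝ) (f : ℝ → ℝ) : ℝ → ℂ :=
  (Ioi 0).indicator fun t ↦ ((Real.exp (-(l * t)) * f t : ℝ) : ℂ)

lemma damped_of_pos (l : ℝ) (f : ℝ → ℝ) (ht : 0 < t) :
    damped l f t = (Real.exp (-(l * t)) * f t : ℝ) :=
  indicator_of_mem (mem_Ioi.2 ht) _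

lemma damped_of_nonpos (l : ℝ) (f : ℝ → ℝ) (ht : t ≤ 0) : damped l f t = 0 :=
  indicator_of_notMem (notMem_Ioi.2 ht) _

lemma norm_sq_damped (l : ℝ) (f : ℝ → ℝ) (t : ℝ) :
    ‖damped l f t‖ ^ 2 = (Ioi 0).indicator (fun t ↦ Real.exp (-(2 * l * t)) * f t ^ 2) t := by
  rcases le_or_gt t 0 with ht | ht
  · simp [damped_of_nonpos l f ht, notMem_Ioi.2 ht]
  · rw [damped_of_pos l f ht, indicator_of_mem (mem_Ioi.2 ht), Complex.norm_real, Real.norm_eq_abs,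
      sq_abs, mul_pow, ← Real.exp_nat_mul]
    congr 2
    push_cast
    ring

lemma integral_norm_sq_damped (l : ℝ) (f : ℝ → ℝ) :
    ∫ t, ‖damped l f t‖ ^ 2 = ∫ t in Ioi 0, Real.exp (-(2 * l * t)) * f t ^ 2 := by
  simp only [norm_sq_damped, integral_indicator measurableSet_Ioi]

lemma aestronglyMeasurable_damped (hf : AEStronglyMeasurable f (volume.restrict (Ioi 0))) (l : ℝ) :
    AEStronglyMeasurable (damped l f) := by
  rw [damped, aestronglyMeasurable_indicator_iff measurableSet_Ioi]
  exact Complex.continuous_ofReal.comp_aestronglyMeasurable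
    ((by fun_prop : Continuous fun t : ℝ ↦ Real.exp (-(l * t))).aestronglyMeasurable.mul hf)

lemma memLp_two_damped_iff (hf : AEStronglyMeasurable f (volume.restrict (Ioi 0))) :
    MemLp (damped l f) 2 ↔ IntegrableOn (fun t ↦ Real.exp (-(2 * l * t)) * f t ^ 2) (Ioi 0) := by
  simp only [memLp_two_iff_integrable_sq_norm (aestronglyMeasurable_damped hf l), norm_sq_damped]
  exact integrable_indicator_iff measurableSet_Ioi

lemma integrableOn_exp_mul_sq_of_memLp_two_damped (h : MemLp (damped l f) 2) :
    IntegrableOn (fun t ↦ Real.exp (-(2 * l * t)) * f t ^ 2) (Ioi 0) := by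
  rw [memLp_two_iff_integrable_sq_norm h.1] at h
  simp only [norm_sq_damped] at h
  exact (integrable_indicator_iff measurableSet_Ioi).1 h

lemma damped_mul_damped (l l' : ℝ) (f k : ℝ → ℝ) :
    damped l f * damped l' k = damped (l + l') (f * k) := by
  ext t
  rcases le_or_gt t 0 with ht | ht
  · simp [damped_of_nonpos _ _ ht]
  · simp only [Pi.mul_apply, damped_of_pos _ _ ht, ← Complex.ofReal_mul]
    rw [add_mul, neg_add, Real.exp_add, mul_mul_mul_comm]

lemma memLp_two_damped_one (hl : 0 < l) : MemLp (damped l 1) 2 := by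
  rw [memLp_two_damped_iff aestronglyMeasurable_one]
  simpa using exp_neg_integrableOn_Ioi 0 (by positivity : 0 < 2 * l)

lemma integrable_damped_of_memLp_two (h : MemLp (damped l f) 2) (hl : l < l') :
    Integrable (damped l' f) := by
  have h' := (memLp_two_damped_one (sub_pos.2 hl)).integrable_mul h
  rwa [damped_mul_damped, sub_add_cancel, one_mul] at h'

lemma memLp_two_damped_of_le (h : MemLp (damped l f) 2) (hl : l ≤ l') : MemLp (damped l' f) 2 := by
  have h' : damped l' f = damped (l' - l) 1 * damped l f := by
    rw [damped_mul_damped, sub_add_cancel, one_mul]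
  refine h.mono (h' ▸ (aestronglyMeasurable_damped aestronglyMeasurable_one _).mul h.1)
    (Eventually.of_forall fun t ↦ ?_)
  rw [← sq_le_sq₀ (norm_nonneg _) (norm_nonneg _), norm_sq_damped, norm_sq_damped]
  refine indicator_le_indicator' fun (ht : 0 < t) ↦ ?_
  gcongr

/- For `f` and `k` supported in the half-line, `(f ⋆ k) t` only involves `s ∈ (0, t)`, and there
`e^{-lt} = e^{-ls} e^{-l(t-s)}`. -/
lemma damped_convolution_damped (l : ℝ) (f k : ℝ → ℝ) :
    damped l f ⋆[ContinuousLinearMap.mul ℂ ℂ] damped l k =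
      damped l fun t ↦ ∫ s in 0..t, k (t - s) * f s := by
  ext t
  have hzero {s : ℝ} (hs : s ∉ Ioo 0 t) : damped l f s * damped l k (t - s) = 0 := by
    rcases le_or_gt s 0 with hs0 | hs0
    · rw [damped_of_nonpos l f hs0, zero_mul]
    · rw [damped_of_nonpos l k (sub_nonpos.2 (not_lt.1 fun hst ↦ hs ⟨hs0, hst⟩)), mul_zero]
  rw [convolution_mul, ← setIntegral_eq_integral_of_forall_compl_eq_zero fun s ↦ hzero]
  rcases le_or_gt t 0 with ht | ht
  · rw [Ioo_eq_empty ht.not_gt, damped_of_nonpos l _ ht, Measure.restrict_empty,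
      integral_zero_measure]
  · rw [damped_of_pos l _ ht, intervalIntegral.integral_of_le ht.le, integral_Ioc_eq_integral_Ioo,
      ← integral_const_mul, ← integral_complex_ofReal]
    refine setIntegral_congr_fun measurableSet_Ioo fun s hs ↦ ?_
    have hexp : Real.exp (-(l * t)) = Real.exp (-(l * s)) * Real.exp (-(l * (t - s))) := by
      rw [← Real.exp_add]
      ring_nf
    simp only [damped_of_pos l f hs.1, damped_of_pos l k (sub_pos.2 hs.2), hexp]
    push_cast
    ring

lemma fourier_damped (l : ℝ) (f : ℝ → ℝ) (y : ℝ) :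
    𝓕 (damped l f) y =
      ∫ t in Ioi (0 : ℝ), f t * Complex.exp (-((l + 2 * π * y * Complex.I) * t)) := by
  rw [Real.fourier_real_eq_integral_exp_smul, ← integral_indicator measurableSet_Ioi]
  congr 1 with t
  rcases le_or_gt t 0 with ht | ht
  · simp [damped_of_nonpos l f ht, notMem_Ioi.2 ht]
  · have hexp : Complex.exp (-((l + 2 * π * y * Complex.I) * t)) =
        Complex.exp (↑(-2 * π * t * y) * Complex.I) * Complex.exp (-(l * t)) := by
      rw [← Complex.exp_add]
      push_cast
      ring_nf
    rw [damped_of_pos l f ht, indicator_of_mem (mem_Ioi.2 ht), hexp]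
    push_cast
    rw [smul_eq_mul]
    ring

end Damped

section Resolvent

lemma aestronglyMeasurable_Ioi_of_forall {ι F : Type*} [LinearOrder ι] [TopologicalSpace ι]
    [OrderTopology ι] [SecondCountableTopology ι] [MeasurableSpace ι] [OpensMeasurableSpace ι]
    [TopologicalSpace F] [TopologicalSpace.PseudoMetrizableSpace F] {μ : Measure ι}
    [NullSingletonClass μ] {f g : ι → F} {a : ι}
    (hg : AEStronglyMeasurable g (μ.restrict (Ioi a)))
    (h : ∀ t > a, AEStronglyMeasurable f (μ.restrict (Ioc a t)) ∨ f t = g t) :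
    AEStronglyMeasurable f (μ.restrict (Ioi a)) := by
  set S : Set ι := {t | AEStronglyMeasurable f (μ.restrict (Ioc a t))}
  obtain ⟨T, hTS, hT, hTU⟩ :=
    TopologicalSpace.isOpen_biUnion_countable S (fun t ↦ Ioo a t) fun _ _ ↦ isOpen_Ioo
  set U := ⋃ t ∈ S, Ioo a t
  have hU : MeasurableSet U := (isOpen_biUnion fun _ _ ↦ isOpen_Ioo).measurableSet
  have hfU : AEStronglyMeasurable f (μ.restrict U) := by
    have := hT.to_subtype
    rw [← hTU, biUnion_eq_iUnion]
    exact .iUnion fun t ↦ AEStronglyMeasurable.mono_set Ioo_subset_Ioc_self (hTS t.2)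
  have hS : (S ∩ (Ioi a \ U)).Subsingleton := by
    rintro t ⟨htS, hat, htU⟩ u ⟨huS, hau, huU⟩
    refine le_antisymm (not_lt.1 fun hut ↦ huU ?_) (not_lt.1 fun htu ↦ htU ?_)
    · exact mem_biUnion htS ⟨hau, hut⟩
    · exact mem_biUnion huS ⟨hat, htu⟩
  have hfU' : AEStronglyMeasurable f (μ.restrict (Ioi a \ U)) := by
    refine (hg.mono_set sdiff_subset).congr ?_
    filter_upwards [ae_restrict_mem (measurableSet_Ioi.diff hU),
      ae_restrict_of_ae (measure_eq_zero_iff_ae_notMem.1 (hS.measure_zero μ))] with t ht htS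
    exact ((h t ht.1).resolve_left fun htS' ↦ htS ⟨htS', ht⟩).symm
  exact (aestronglyMeasurable_union_iff.2 ⟨hfU, hfU'⟩).mono_set fun t ht ↦
    (em (t ∈ U)).imp_right fun htU ↦ ⟨ht, htU⟩

variable {K E : ℝ → ℝ} {β l t : ℝ}

/- If `E` is not measurable on `(0, t]` then neither is the integrand of the Volterra equation,
whose integral takes the junk value `0`, so that `E t = K t`. -/
lemma aestronglyMeasurable_of_solvesResolventEq (hE : SolvesResolventEq K β E) (hK : Measurable K)
    (hK0 : ∀ t > 0, K t ≠ 0) (hβ : β ≠ 0) :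
    AEStronglyMeasurable E (volume.restrict (Ioi 0)) := by
  refine aestronglyMeasurable_Ioi_of_forall hK.aestronglyMeasurable fun t ht ↦ ?_
  by_cases hint : IntervalIntegrable (fun s ↦ K (t - s) * (β * E s)) volume 0 t
  · left
    rw [intervalIntegrable_iff_integrableOn_Ioc_of_le ht.le] at hint
    have hmul : AEStronglyMeasurable (fun s ↦ (K (t - s) * β)⁻¹ * (K (t - s) * (β * E s)))
        (volume.restrict (Ioc 0 t)) :=
      (by fun_prop : Measurable fun s ↦ (K (t - s) * β)⁻¹).aestronglyMeasurable.mul hint.1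
    rw [← restrict_Ioo_eq_restrict_Ioc] at hmul ⊢
    refine hmul.congr ?_
    filter_upwards [ae_restrict_mem measurableSet_Ioo] with s hs
    have := hK0 (t - s) (sub_pos.2 hs.2)
    field_simp
  · right
    rw [hE.2 t ht, intervalIntegral.integral_undef hint, add_zero]

lemma damped_add_convolution_eq {f : ℝ → ℝ} (hE : SolvesResolventEq K β E) (l : ℝ)
    (hf : EqOn f E (Ioc 0 t)) :
    damped l f t + (-β : ℝ) * (damped l f ⋆[ContinuousLinearMap.mul ℂ ℂ] damped l K) t =
      damped l K t := by
  rw [damped_convolution_damped]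
  rcases le_or_gt t 0 with ht | ht
  · simp [damped_of_nonpos _ _ ht]
  have hint : ∫ s in 0..t, K (t - s) * (β * E s) = β * ∫ s in 0..t, K (t - s) * f s := by
    rw [← intervalIntegral.integral_const_mul]
    refine intervalIntegral.integral_congr_Ioo_of_le ht.le fun s hs ↦ ?_
    simp only [hf (Ioo_subset_Ioc_self hs)]
    ring
  have hEt := hE.2 t ht
  rw [hint, ← hf (right_mem_Ioc.2 ht)] at hEt
  simp only [damped_of_pos _ _ ht, hEt]
  push_cast
  ring

lemma exp_neg_mul_indicator_sq (l : ℝ) (f : ℝ → ℝ) (s : Set ℝ) :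
    (fun t ↦ Real.exp (-(2 * l * t)) * s.indicator f t ^ 2) =
      s.indicator fun t ↦ Real.exp (-(2 * l * t)) * f t ^ 2 := by
  ext t
  by_cases ht : t ∈ s <;> simp [ht]

lemma integral_norm_sq_damped_indicator_Ioc (l : ℝ) (f : ℝ → ℝ) (T : ℝ) :
    ∫ t, ‖damped l ((Ioc 0 T).indicator f) t‖ ^ 2 =
      ∫ t in Ioc 0 T, Real.exp (-(2 * l * t)) * f t ^ 2 := by
  rw [integral_norm_sq_damped, exp_neg_mul_indicator_sq, setIntegral_indicator measurableSet_Ioc,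
    inter_eq_right.2 Ioc_subset_Ioi_self]

lemma memLp_two_damped_indicator_Ioc {T : ℝ} (hl : 0 ≤ l)
    (hEm : AEStronglyMeasurable E (volume.restrict (Ioi 0)))
    (hE : IntegrableOn (fun t ↦ E t ^ 2) (Ioc 0 T)) :
    MemLp (damped l ((Ioc 0 T).indicator E)) 2 := by
  refine memLp_two_damped_of_le ?_ hl
  rw [memLp_two_damped_iff (hEm.indicator measurableSet_Ioc), exp_neg_mul_indicator_sq]
  simpa using (hE.integrable_indicator measurableSet_Ioc).integrableOn

lemma setIntegral_exp_mul_sq_le_of_solvesResolventEq {T : ℝ} (hE : SolvesResolventEq K β E)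
    (hβ : β ≤ 0) (hEm : AEStronglyMeasurable E (volume.restrict (Ioi 0))) (hl : 0 < l)
    (hK : Integrable (damped l K)) (hK2 : MemLp (damped l K) 2)
    (hpos : ∀ y, 0 ≤ (𝓕 (damped l K) y).re) (hT : 0 < T) :
    ∫ t in Ioc 0 T, Real.exp (-(2 * l * t)) * E t ^ 2 ≤ ∫ t, ‖damped l K t‖ ^ 2 := by
  rw [← integral_norm_sq_damped_indicator_Ioc]
  have hET : IntegrableOn (fun t ↦ E t ^ 2) (Ioc 0 T) :=
    (intervalIntegrable_iff_integrableOn_Ioc_of_le hT.le).1 (hE.1 T hT)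
  refine integral_norm_sq_le_of_add_convolution_eq (neg_nonneg.2 hβ)
    (integrable_damped_of_memLp_two (memLp_two_damped_indicator_Ioc le_rfl hEm hET) hl)
    (memLp_two_damped_indicator_Ioc hl.le hEm hET) hK hK2 hpos fun t ht ↦ ?_
  refine damped_add_convolution_eq hE l fun s hs ↦ ?_
  have htT : t ≤ T := by
    contrapose! ht
    simp [damped, ht]
  exact indicator_of_mem (Ioc_subset_Ioc_right htT hs) E

lemma memLp_two_damped_of_solvesResolventEq (hE : SolvesResolventEq K β E) (hβ : β ≤ 0)
    (hEm : AEStronglyMeasurable E (volume.restrict (Ioi 0))) (hl : 0 < l)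
    (hK : Integrable (damped l K)) (hK2 : MemLp (damped l K) 2)
    (hpos : ∀ y, 0 ≤ (𝓕 (damped l K) y).re) : MemLp (damped l E) 2 := by
  rw [memLp_two_damped_iff hEm]
  refine integrableOn_Ioi_of_intervalIntegral_norm_bounded (b := fun n : ℕ ↦ (n + 1 : ℝ))
    (∫ t, ‖damped l K t‖ ^ 2) 0 (fun n ↦ ?_)
    (tendsto_atTop_add_const_right _ _ tendsto_natCast_atTop_atTop)
    (Eventually.of_forall fun n ↦ ?_)
  · rw [← intervalIntegrable_iff_integrableOn_Ioc_of_le (by positivity)]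
    exact (hE.1 _ (by positivity)).continuousOn_mul (by fun_prop)
  · rw [intervalIntegral.integral_of_le (by positivity)]
    simp only [norm_mul, norm_pow, Real.norm_eq_abs, Real.abs_exp, sq_abs]
    exact setIntegral_exp_mul_sq_le_of_solvesResolventEq hE hβ hEm hl hK hK2 hpos (by positivity)

lemma fourier_damped_of_solvesResolventEq (hE : SolvesResolventEq K β E)
    (hEl : Integrable (damped l E)) (hK : Integrable (damped l K)) (y : ℝ) :
    𝓕 (damped l E) y * (1 - β * 𝓕 (damped l K) y) = 𝓕 (damped l K) y := by
  have heq : damped l E + ((-β : ℝ) : ℂ) •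
      (damped l E ⋆[ContinuousLinearMap.mul ℂ ℂ] damped l K) = damped l K :=
    funext fun _ ↦ damped_add_convolution_eq hE l fun _ _ ↦ rfl
  have h := fourier_add_smul_convolution hEl hK (-β : ℝ) y
  rw [heq] at h
  push_cast at h
  linear_combination -h

end Resolvent

section FractionalKernel

variable {α β l : ℝ}

lemma re_cpow_ofReal_nonneg {z : ℂ} {s : ℝ} (hz : 0 ≤ z.re) (hs : |s| ≤ 1) :
    0 ≤ (z ^ (s : ℂ)).re := by
  rw [Complex.cpow_ofReal_re]
  refine mul_nonneg (by positivity) (Real.cos_nonneg_of_mem_Icc (abs_le.1 ?_))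
  rw [abs_mul]
  exact (mul_le_of_le_one_right (abs_nonneg _) hs).trans (Complex.abs_arg_le_pi_div_two_iff.2 hz)

lemma measurable_fractionalKernel (α : ℝ) : Measurable (fractionalKernel α) := by
  unfold fractionalKernel
  fun_prop

lemma fractionalKernel_pos {t : ℝ} (hα : 0 < α) (ht : 0 < t) : 0 < fractionalKernel α t :=
  div_pos (Real.rpow_pos_of_pos ht _) (Real.Gamma_pos_of_pos hα)

lemma integrable_damped_fractionalKernel (hα : 0 < α) (hl : 0 < l) :
    Integrable (damped l (fractionalKernel α)) := by
  have h : IntegrableOn (fun t ↦ Real.exp (-(l * t)) * fractionalKernel α t) (Ioi 0) := by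
    refine IntegrableOn.congr_fun ((integrableOn_rpow_mul_exp_neg_mul (s := α - 1)
      (by linarith) hl).div_const (Real.Gamma α)) (fun t _ ↦ ?_) measurableSet_Ioi
    simp only [fractionalKernel]
    ring
  rw [damped, integrable_indicator_iff measurableSet_Ioi]
  exact h.ofReal

lemma memLp_two_damped_fractionalKernel (hα : 1 / 2 < α) (hl : 0 < l) :
    MemLp (damped l (fractionalKernel α)) 2 := by
  rw [memLp_two_damped_iff (measurable_fractionalKernel α).aestronglyMeasurable]
  refine IntegrableOn.congr_fun ((integrableOn_rpow_mul_exp_neg_mul (s := (α - 1) * 2)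
    (by linarith) (by positivity : 0 < 2 * l)).div_const (Real.Gamma α ^ 2)) (fun t ht ↦ ?_)
    measurableSet_Ioi
  simp only [fractionalKernel, div_pow, Real.rpow_mul (mem_Ioi.1 ht).le, Real.rpow_two]
  ring

lemma fourier_damped_fractionalKernel (hα : 0 < α) (hl : 0 < l) (y : ℝ) :
    𝓕 (damped l (fractionalKernel α)) y = ((l + 2 * π * y * Complex.I : ℂ) ^ (α : ℂ))⁻¹ := by
  have hre : 0 < (l + 2 * π * y * Complex.I : ℂ).re := by simpa
  have hΓ : Complex.Gamma α ≠ 0 := Complex.Gamma_ne_zero_of_re_pos (by simpa)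
  have harg : (l + 2 * π * y * Complex.I : ℂ).arg ≠ π :=
    Complex.slitPlane_arg_ne_pi (Or.inl hre)
  refine mul_right_cancel₀ hΓ ?_
  rw [← Complex.inv_cpow _ _ harg, ← one_div, ← integral_cpow_mul_cexp_neg_mul_Ioi (by simpa) hre,
    fourier_damped, ← integral_mul_const]
  refine setIntegral_congr_fun measurableSet_Ioi fun t ht ↦ ?_
  rw [Complex.Gamma_ofReal] at hΓ ⊢
  simp only [fractionalKernel]
  push_cast [Complex.ofReal_cpow (mem_Ioi.1 ht).le]
  field_simp

lemma re_fourier_damped_fractionalKernel_nonneg (hα0 : 0 < α) (hα1 : α ≤ 1) (hl : 0 < l) (y : ℝ) :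
    0 ≤ (𝓕 (damped l (fractionalKernel α)) y).re := by
  rw [fourier_damped_fractionalKernel hα0 hl, Complex.inv_re]
  exact div_nonneg (re_cpow_ofReal_nonneg (by simpa using hl.le) (abs_le.2 ⟨by linarith, hα1⟩))
    (Complex.normSq_nonneg _)

variable {E : ℝ → ℝ}

lemma memLp_two_damped_of_solvesResolventEq_fractionalKernel (hα : α ∈ Ioc (1 / 2) 1) (hβ : β < 0)
    (hE : SolvesResolventEq (fractionalKernel α) β E) (hl : 0 < l) : MemLp (damped l E) 2 := by
  have hα0 : 0 < α := one_half_pos.trans hα.1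
  have hEm := aestronglyMeasurable_of_solvesResolventEq hE (measurable_fractionalKernel α)
    (fun t ht ↦ (fractionalKernel_pos hα0 ht).ne') hβ.ne
  exact memLp_two_damped_of_solvesResolventEq hE hβ.le hEm hl
    (integrable_damped_fractionalKernel hα0 hl) (memLp_two_damped_fractionalKernel hα.1 hl)
    (re_fourier_damped_fractionalKernel_nonneg hα0 hα.2 hl)

lemma fourier_damped_of_solvesResolventEq_fractionalKernel (hα : 0 < α)
    (hE : SolvesResolventEq (fractionalKernel α) β E) (hl : 0 < l)
    (hEl : Integrable (damped l E)) (y : ℝ) :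
    𝓕 (damped l E) y = ((l + 2 * π * y * Complex.I : ℂ) ^ (α : ℂ) + (-β : ℝ))⁻¹ := by
  have hz : (l + 2 * π * y * Complex.I : ℂ) ≠ 0 := fun h ↦
    hl.ne' (by simpa using congrArg Complex.re h)
  have hw : (l + 2 * π * y * Complex.I : ℂ) ^ (α : ℂ) ≠ 0 := by simp [Complex.cpow_eq_zero_iff, hz]
  have h := fourier_damped_of_solvesResolventEq hE hEl (integrable_damped_fractionalKernel hα hl) y
  rw [fourier_damped_fractionalKernel hα hl] at h
  refine eq_inv_of_mul_eq_one_left ?_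
  field_simp at h
  push_cast
  linear_combination h

lemma integral_exp_mul_sq_of_solvesResolventEq_fractionalKernel (hα : α ∈ Ioc (1 / 2) 1)
    (hβ : β < 0) (hE : SolvesResolventEq (fractionalKernel α) β E) (hl : 0 < l) :
    ∫ t in Ioi 0, Real.exp (-(2 * l * t)) * E t ^ 2 =
      ∫ y : ℝ, (‖(l + 2 * π * y * Complex.I : ℂ) ^ (α : ℂ) + (-β : ℝ)‖ ^ 2)⁻¹ := by
  have hint : Integrable (damped l E) := integrable_damped_of_memLp_two
    (memLp_two_damped_of_solvesResolventEq_fractionalKernel hα hβ hE (half_pos hl))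
    (half_lt_self hl)
  rw [← integral_norm_sq_damped, ← integral_norm_sq_fourier_eq hint
    (memLp_two_damped_of_solvesResolventEq_fractionalKernel hα hβ hE hl)]
  simp only [fourier_damped_of_solvesResolventEq_fractionalKernel (one_half_pos.trans hα.1) hE hl
    hint, norm_inv, inv_pow]

end FractionalKernel

section SymbolEnergy

variable {α l : ℝ} {z : ℂ}

lemma ofReal_mul_cpow {r : ℝ} (hr : 0 < r) (z w : ℂ) : (r * z) ^ w = (r : ℂ) ^ w * z ^ w := by
  rcases eq_or_ne z 0 with rfl | hz
  · rcases eq_or_ne w 0 with rfl | hw <;> simp [*]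
  · have hr' : (r : ℂ) ≠ 0 := Complex.ofReal_ne_zero.2 hr.ne'
    rw [Complex.cpow_def_of_ne_zero (mul_ne_zero hr' hz), Complex.cpow_def_of_ne_zero hr',
      Complex.cpow_def_of_ne_zero hz, Complex.log_ofReal_mul hr hz, Complex.ofReal_log hr.le,
      add_mul, Complex.exp_add]

lemma norm_cpow_ofReal_add_one_sq (z : ℂ) (s : ℝ) :
    ‖z ^ (s : ℂ) + 1‖ ^ 2 = ‖z‖ ^ (2 * s) + 2 * (z ^ (s : ℂ)).re + 1 := by
  rw [Complex.sq_norm, Complex.normSq_add, ← Complex.sq_norm, Complex.norm_cpow_real, mul_comm 2 s,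
    Real.rpow_mul (norm_nonneg z)]
  simp
  ring

lemma one_add_norm_rpow_le_norm_cpow_add_one_sq {s : ℝ} (hz : 0 ≤ z.re) (hs : |s| ≤ 1) :
    1 + ‖z‖ ^ (2 * s) ≤ ‖z ^ (s : ℂ) + 1‖ ^ 2 := by
  rw [norm_cpow_ofReal_add_one_sq]
  linarith [re_cpow_ofReal_nonneg hz hs]

lemma norm_ofReal_mul_I_cpow_add_one_sq (u s : ℝ) :
    ‖(u * Complex.I : ℂ) ^ (s : ℂ) + 1‖ ^ 2 =
      1 + 2 * |u| ^ s * Real.cos (π * s / 2) + |u| ^ (2 * s) := by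
  have hcos : |u| ^ s * Real.cos ((u * Complex.I).arg * s) = |u| ^ s * Real.cos (π * s / 2) := by
    rcases lt_trichotomy u 0 with hu | rfl | hu
    · rw [Complex.arg_eq_neg_pi_div_two_iff.2 (by simpa using hu), neg_mul, Real.cos_neg,
        div_mul_eq_mul_div]
    · rcases eq_or_ne s 0 with rfl | hs <;> simp [*]
    · rw [Complex.arg_eq_pi_div_two_iff.2 (by simpa using hu), div_mul_eq_mul_div]
  rw [norm_cpow_ofReal_add_one_sq, Complex.cpow_ofReal_re]
  simp only [norm_mul, Complex.norm_real, Complex.norm_I, mul_one, Real.norm_eq_abs, hcos]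
  ring

lemma one_add_rpow_le {p r : ℝ} (hp : 0 ≤ p) (hr : 0 ≤ r) :
    (1 + r) ^ p ≤ 2 ^ p * (1 + r ^ p) := by
  calc (1 + r) ^ p ≤ (2 * max 1 r) ^ p := by
        gcongr
        linarith [le_max_left 1 r, le_max_right 1 r]
    _ = 2 ^ p * max 1 r ^ p := Real.mul_rpow zero_le_two (by positivity)
    _ ≤ 2 ^ p * (1 + r ^ p) := by
        have : 0 ≤ r ^ p := Real.rpow_nonneg hr p
        gcongr
        rcases max_cases 1 r with h | h <;> simp [h, this]

lemma integrable_inv_one_add_norm_rpow {V : Type*} [NormedAddCommGroup V] [NormedSpace ℝ V]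
    [FiniteDimensional ℝ V] [MeasurableSpace V] [BorelSpace V] {μ : Measure V}
    [μ.IsAddHaarMeasure] {p : ℝ} (hp : Module.finrank ℝ V < p) :
    Integrable (fun x ↦ (1 + ‖x‖ ^ p)⁻¹) μ := by
  have hp0 : 0 ≤ p := (Nat.cast_nonneg _).trans hp.le
  refine ((integrable_one_add_norm (μ := μ) hp).const_mul (2 ^ p)).mono'
    (by fun_prop : Measurable _).aestronglyMeasurable (Eventually.of_forall fun x ↦ ?_)
  have h := one_add_rpow_le hp0 (norm_nonneg x)
  rw [Real.norm_of_nonneg (by positivity), Real.rpow_neg (by positivity), ← div_eq_mul_inv,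
    inv_eq_one_div, div_le_div_iff₀ (by positivity) (by positivity), one_mul]
  exact h

/-- The energy `∫ |(z ^ α + 1)⁻¹|² du` of the symbol `(z ^ α + 1)⁻¹` on the vertical line
`z = l + iu`. -/
def symbolEnergy (α l : ℝ) : ℝ := ∫ u : ℝ, (‖(l + u * Complex.I : ℂ) ^ (α : ℂ) + 1‖ ^ 2)⁻¹

lemma integral_inv_norm_cpow_add_sq {b : ℝ} (hα : α ≠ 0) (hb : 0 < b) (l : ℝ) :
    ∫ y : ℝ, (‖(l + 2 * π * y * Complex.I : ℂ) ^ (α : ℂ) + b‖ ^ 2)⁻¹ =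
      (2 * π)⁻¹ * b ^ (1 / α - 2) * symbolEnergy α (l / b ^ (1 / α)) := by
  set r := b ^ (1 / α) with hr
  have hr0 : 0 < r := Real.rpow_pos_of_pos hb _
  have hrα : r ^ α = b := by rw [hr, ← Real.rpow_mul hb.le, one_div_mul_cancel hα, Real.rpow_one]
  have hscale (y : ℝ) : (‖(l + 2 * π * y * Complex.I : ℂ) ^ (α : ℂ) + b‖ ^ 2)⁻¹ =
      (b ^ 2)⁻¹ * (‖((l / r : ℝ) + (2 * π / r * y : ℝ) * Complex.I : ℂ) ^ (α : ℂ) + 1‖ ^ 2)⁻¹ := by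
    have hz : (l + 2 * π * y * Complex.I : ℂ) =
        r * ((l / r : ℝ) + (2 * π / r * y : ℝ) * Complex.I) := by
      have : (r : ℂ) ≠ 0 := Complex.ofReal_ne_zero.2 hr0.ne'
      push_cast
      field_simp
    rw [hz, ofReal_mul_cpow hr0, ← Complex.ofReal_cpow hr0.le, hrα, ← mul_add_one, norm_mul,
      Complex.norm_of_nonneg hb.le, mul_pow, mul_inv]
  simp only [hscale]
  rw [integral_const_mul, Measure.integral_comp_mul_left
    (fun u : ℝ ↦ (‖((l / r : ℝ) + u * Complex.I : ℂ) ^ (α : ℂ) + 1‖ ^ 2)⁻¹), Real.rpow_sub hb,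
    abs_of_pos (by positivity), Real.rpow_two, ← hr, smul_eq_mul, ← symbolEnergy]
  field_simp

lemma symbolEnergy_zero (α : ℝ) :
    symbolEnergy α 0 =
      2 * ∫ u in Ioi (0 : ℝ), 1 / (1 + 2 * u ^ α * Real.cos (π * α / 2) + u ^ (2 * α)) := by
  simp only [symbolEnergy, Complex.ofReal_zero, zero_add, norm_ofReal_mul_I_cpow_add_one_sq,
    ← one_div]
  exact integral_comp_abs
    (f := fun u ↦ 1 / (1 + 2 * u ^ α * Real.cos (π * α / 2) + u ^ (2 * α)))

lemma continuousWithinAt_symbolEnergy (hα : α ∈ Ioc (1 / 2) 1) :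
    ContinuousWithinAt (symbolEnergy α) (Ici 0) 0 := by
  have hα' : |α| ≤ 1 := abs_le.2 ⟨by linarith [hα.1], hα.2⟩
  have hbound {l : ℝ} (hl : 0 ≤ l) (u : ℝ) :
      1 + ‖u‖ ^ (2 * α) ≤ ‖(l + u * Complex.I : ℂ) ^ (α : ℂ) + 1‖ ^ 2 := by
    refine le_trans ?_ (one_add_norm_rpow_le_norm_cpow_add_one_sq (by simpa) hα')
    gcongr
    · linarith [hα.1]
    · simpa using Complex.abs_im_le_norm (l + u * Complex.I)
  have hpos (u : ℝ) : 0 < 1 + ‖u‖ ^ (2 * α) := by positivity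
  refine continuousWithinAt_of_dominated (bound := fun u ↦ (1 + ‖u‖ ^ (2 * α))⁻¹)
    (Eventually.of_forall fun l ↦ ?_) ?_ (integrable_inv_one_add_norm_rpow ?_) ?_
  · exact ((by fun_prop : Measurable fun u : ℝ ↦
      ‖(l + u * Complex.I : ℂ) ^ (α : ℂ) + 1‖ ^ 2).inv).aestronglyMeasurable
  · filter_upwards [self_mem_nhdsWithin] with l hl
    refine Eventually.of_forall fun u ↦ ?_
    rw [Real.norm_of_nonneg (by positivity)]
    exact inv_anti₀ (hpos u) (hbound hl u)
  · rw [Module.finrank_self, Nat.cast_one]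
    linarith [hα.1]
  · filter_upwards [Measure.ae_ne volume 0] with u hu
    refine ContinuousAt.continuousWithinAt ?_
    have hslit : ((0 : ℝ) + u * Complex.I : ℂ) ∈ Complex.slitPlane := Or.inr (by simpa using hu)
    have hline : ContinuousAt (fun l : ℝ ↦ (l + u * Complex.I : ℂ)) 0 := by fun_prop
    exact (((hline.cpow continuousAt_const hslit).add_const 1).norm.pow 2).inv₀
      ((hpos u).trans_le (hbound le_rfl u)).ne'

end SymbolEnergy

section AbelSummation

variable {f : ℝ → ℝ} {R : ℝ}

lemma tendsto_exp_neg_mul_mul (t c : ℝ) :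
    Tendsto (fun l ↦ Real.exp (-(l * t)) * c) (𝓝[>] 0) (𝓝 c) := by
  have h : Continuous fun l ↦ Real.exp (-(l * t)) * c := by fun_prop
  simpa using (h.tendsto 0).mono_left nhdsWithin_le_nhds

lemma integrableOn_of_tendsto_integral_exp_neg_mul (hf : ∀ t > 0, 0 ≤ f t)
    (hint : ∀ l > 0, IntegrableOn (fun t ↦ Real.exp (-(l * t)) * f t) (Ioi 0))
    (hlim : Tendsto (fun l ↦ ∫ t in Ioi 0, Real.exp (-(l * t)) * f t) (𝓝[>] 0) (𝓝 R)) :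
    IntegrableOn f (Ioi 0) := by
  have hl : Tendsto (fun n : ℕ ↦ 1 / (n + 1 : ℝ)) atTop (𝓝[>] 0) :=
    tendsto_nhdsWithin_iff.2 ⟨tendsto_one_div_add_atTop_nhds_zero_nat,
      Eventually.of_forall fun n ↦ mem_Ioi.2 Nat.one_div_pos_of_nat⟩
  have henorm (n : ℕ) : ∫⁻ t in Ioi 0, ‖Real.exp (-(1 / (n + 1 : ℝ) * t)) * f t‖ₑ =
      ENNReal.ofReal (∫ t in Ioi 0, Real.exp (-(1 / (n + 1 : ℝ) * t)) * f t) := by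
    rw [← ofReal_integral_norm_eq_lintegral_enorm (hint _ Nat.one_div_pos_of_nat)]
    congr 1
    refine setIntegral_congr_fun measurableSet_Ioi fun t ht ↦ ?_
    exact Real.norm_of_nonneg (mul_nonneg (Real.exp_nonneg _) (hf t ht))
  refine integrable_of_tendsto
    (Eventually.of_forall fun t ↦ (tendsto_exp_neg_mul_mul t (f t)).comp hl)
    (fun n ↦ (hint _ Nat.one_div_pos_of_nat).1) ?_
  simp only [Function.comp_apply, henorm]
  exact ((ENNReal.tendsto_ofReal (hlim.comp hl)).liminf_eq).trans_ne ENNReal.ofReal_ne_top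

lemma integral_eq_of_tendsto_integral_exp_neg_mul (hf : IntegrableOn f (Ioi 0))
    (hlim : Tendsto (fun l ↦ ∫ t in Ioi 0, Real.exp (-(l * t)) * f t) (𝓝[>] 0) (𝓝 R)) :
    ∫ t in Ioi 0, f t = R := by
  refine tendsto_nhds_unique (tendsto_integral_filter_of_dominated_convergence (fun t ↦ ‖f t‖)
    (Eventually.of_forall fun l ↦ ?_) ?_ hf.norm
    (Eventually.of_forall fun t ↦ tendsto_exp_neg_mul_mul t (f t))) hlim
  · exact (by fun_prop : Measurable fun t ↦ Real.exp (-(l * t))).aestronglyMeasurable.mul hf.1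
  · filter_upwards [self_mem_nhdsWithin] with l (hl : 0 < l)
    filter_upwards [ae_restrict_mem measurableSet_Ioi] with t (ht : 0 < t)
    rw [norm_mul, Real.norm_of_nonneg (Real.exp_nonneg _)]
    exact mul_le_of_le_one_left (norm_nonneg _)
      (Real.exp_le_one_iff.2 (neg_nonpos.2 (mul_nonneg hl.le ht.le)))

end AbelSummation

section EnergyLimit

variable {α β l : ℝ} {E : ℝ → ℝ}

lemma integrableOn_exp_mul_sq_of_solvesResolventEq_fractionalKernel (hα : α ∈ Ioc (1 / 2) 1)
    (hβ : β < 0) (hE : SolvesResolventEq (fractionalKernel α) β E) (hl : 0 < l) :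
    IntegrableOn (fun t ↦ Real.exp (-(l * t)) * E t ^ 2) (Ioi 0) := by
  simpa only [mul_div_cancel₀ l two_ne_zero] using integrableOn_exp_mul_sq_of_memLp_two_damped
    (memLp_two_damped_of_solvesResolventEq_fractionalKernel hα hβ hE (half_pos hl))

lemma integral_exp_mul_sq_eq_symbolEnergy (hα : α ∈ Ioc (1 / 2) 1) (hβ : β < 0)
    (hE : SolvesResolventEq (fractionalKernel α) β E) (hl : 0 < l) :
    ∫ t in Ioi 0, Real.exp (-(l * t)) * E t ^ 2 =
      (2 * π)⁻¹ * (-β) ^ (1 / α - 2) * symbolEnergy α (l / 2 / (-β) ^ (1 / α)) := by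
  rw [← integral_inv_norm_cpow_add_sq (one_half_pos.trans hα.1).ne' (neg_pos.2 hβ),
    ← integral_exp_mul_sq_of_solvesResolventEq_fractionalKernel hα hβ hE (half_pos hl),
    mul_div_cancel₀ l two_ne_zero]

lemma tendsto_integral_exp_mul_sq (hα : α ∈ Ioc (1 / 2) 1) (hβ : β < 0)
    (hE : SolvesResolventEq (fractionalKernel α) β E) :
    Tendsto (fun l ↦ ∫ t in Ioi 0, Real.exp (-(l * t)) * E t ^ 2) (𝓝[>] 0)
      (𝓝 ((2 * π)⁻¹ * (-β) ^ (1 / α - 2) * symbolEnergy α 0)) := by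
  have hr : 0 < (-β) ^ (1 / α) := Real.rpow_pos_of_pos (neg_pos.2 hβ) _
  have hl : Tendsto (fun l : ℝ ↦ l / 2 / (-β) ^ (1 / α)) (𝓝[>] 0) (𝓝[≥] 0) := by
    refine tendsto_nhdsWithin_iff.2 ⟨?_, ?_⟩
    · have h : Continuous fun l : ℝ ↦ l / 2 / (-β) ^ (1 / α) := by fun_prop
      simpa using (h.tendsto 0).mono_left nhdsWithin_le_nhds
    · filter_upwards [self_mem_nhdsWithin] with l (hl : 0 < l)
      exact (by positivity : 0 ≤ l / 2 / (-β) ^ (1 / α))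
  refine (((continuousWithinAt_symbolEnergy hα).tendsto.comp hl).const_mul _).congr' ?_
  filter_upwards [self_mem_nhdsWithin] with l hl
  exact (integral_exp_mul_sq_eq_symbolEnergy hα hβ hE hl).symm

end EnergyLimit

theorem fractional_Ebeta_L2_norm_general (α β : ℝ) (hα : α ∈ Ioc (1 / 2 : ℝ) 1) (hβ : β < 0)
    (E : ℝ → ℝ) (hE : SolvesResolventEq (fractionalKernel α) β E) :
    IntegrableOn (fun t ↦ E t ^ 2) (Ioi 0) ∧
      ∫ t in Ioi (0 : ℝ), E t ^ 2 =
        ((1 / π) * ∫ u in Ioi (0 : ℝ),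
          1 / (1 + 2 * u ^ α * Real.cos (π * α / 2) + u ^ (2 * α))) * |β| ^ (1 / α - 2) := by
  have hlim := tendsto_integral_exp_mul_sq hα hβ hE
  have hint : IntegrableOn (fun t ↦ E t ^ 2) (Ioi 0) :=
    integrableOn_of_tendsto_integral_exp_neg_mul (fun t _ ↦ sq_nonneg (E t))
      (fun _ ↦ integrableOn_exp_mul_sq_of_solvesResolventEq_fractionalKernel hα hβ hE) hlim
  refine ⟨hint, (integral_eq_of_tendsto_integral_exp_neg_mul hint hlim).trans ?_⟩
  rw [symbolEnergy_zero, abs_of_neg hβ]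
  ring

/-- For the fractional kernel `K_α` with `α ∈ (1/2,1)` and `β < 0`,
`∫₀^∞ E_β(t)² dt = C_α |β|^{1/α - 2}` with
`C_α = (1/π)∫₀^∞ du/(1 + 2u^α cos(πα/2) + u^{2α})`. -/
theorem fractional_Ebeta_L2_norm
    (α β : ℝ) (hα : α ∈ Set.Ioo (1/2 : ℝ) 1) (hβ : β < 0)
    (E : ℝ → ℝ)
    (hE : SolvesResolventEq (fractionalKernel α) β E) :
    (∫ t in Set.Ioi (0:ℝ), (E t) ^ 2) =
      ((1 / π) * ∫ u in Set.Ioi (0:ℝ),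
        1 / (1 + 2 * u ^ α * Real.cos (π * α / 2) + u ^ (2 * α))) *
      |β| ^ (1 / α - 2) :=
  (fractional_Ebeta_L2_norm_general α β (Ioo_subset_Ioc_self hα) hβ E hE).2

end
end
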